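/- Let d ≥ 1, a ≥ 0, and let q, r > 2 satisfy 2/q = (d+a+1)·(1/2 − 1/r). Then there exists C = C(d,a,r) > 0 such that for every F ∈ 𝒮(ℝ^{d+1}_+×ℝ), the function 𝕋_a(F)(X) := ∫_ℝ ∫_{ℝ^{d+1}_+} 𝕊_a(X,Y,−t) F(Y,t) dω_a(Y) dt satisfies ‖𝕋_a(F)‖_{L²_a(ℝ^{d+1}_+)} ≤ C · ( ∫_ℝ ( ∫_{ℝ^{d+1}_+} |F(Y,t)|^{r'} dω_a(Y) )^{q'/r'} dt )^{1/q'}. In particular, for q = r = 2(d+a+3)/(d+a+1) there is C = C(d,a) > 0 with ‖𝕋_a(F)‖_{L²_a(ℝ^{d+1}_+)} ≤ C·‖F‖_{L^{2(d+a+3)/(d+a+5)}(ℝ^{d+1}_+×ℝ, dω_a dt)}. -/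

import Mathlib

open MeasureTheory Filter Complex
open scoped ENNReal NNReal Topology

noncomputable section

/-- Bessel function of the first kind of order `ν`, via its power series. -/
def besselJ (ν : ℝ) (x : ℝ) : ℝ :=
  ∑' k : ℕ, ((-1 : ℝ) ^ k / ((k.factorial : ℝ) * Real.Gamma ((k : ℝ) + ν + 1))) *
    (x / 2) ^ (2 * (k : ℝ) + ν)

/-- The half-line Schrödinger–Bessel kernel `S_a(z,ζ,t)`. -/
def SaK (a : ℝ) (z ζ t : ℝ) : ℂ :=
  (Complex.exp (-Complex.I * ((Real.sign t : ℝ) : ℂ) * (((a + 1) * Real.pi / 4 : ℝ) : ℂ)) /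
      (((2 * |t|) ^ ((a + 1) / 2) : ℝ) : ℂ)) *
    (((z * ζ / (2 * |t|)) ^ ((1 - a) / 2) : ℝ) : ℂ) *
    ((besselJ ((a - 1) / 2) (z * ζ / (2 * |t|)) : ℝ) : ℂ) *
    Complex.exp (Complex.I * ((z ^ 2 + ζ ^ 2 : ℝ) : ℂ) / ((4 * t : ℝ) : ℂ))

/-- The boundary kernel `S_a(z,0,t)`. -/
def Sa0 (a : ℝ) (z t : ℝ) : ℂ :=
  ((((2 : ℝ) ^ (-a) / Real.Gamma ((a + 1) / 2) : ℝ)) : ℂ) *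
    Complex.exp (-Complex.I * ((Real.sign t : ℝ) : ℂ) * (((a + 1) * Real.pi / 4 : ℝ) : ℂ)) *
    (((|t| ^ (-((a + 1) / 2)) : ℝ)) : ℂ) *
    Complex.exp (Complex.I * ((z ^ 2 : ℝ) : ℂ) / ((4 * t : ℝ) : ℂ))

/-- The free Schrödinger kernel on `ℝ^d` (principal branch of the power). -/
def Sfree (d : ℕ) (x y : Fin d → ℝ) (t : ℝ) : ℂ :=
  (4 * (Real.pi : ℂ) * Complex.I * (t : ℂ)) ^ (-(d : ℂ) / 2) *
    Complex.exp (Complex.I * ((∑ i, (x i - y i) ^ 2 : ℝ) : ℂ) / ((4 * t : ℝ) : ℂ))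

/-- The full half-space kernel `𝕊_a(X,Y,t) = S_a(z,ζ,t)·S(x,y,t)`. -/
def SK (d : ℕ) (a : ℝ) (X Y : (Fin d → ℝ) × ℝ) (t : ℝ) : ℂ :=
  SaK a X.2 Y.2 t * Sfree d X.1 Y.1 t

/-- The weighted measure `dω_a = z^a dx dz` on the half-space `ℝ^d × (0,∞)`. -/
def ωa (d : ℕ) (a : ℝ) : Measure ((Fin d → ℝ) × ℝ) :=
  (volume : Measure (Fin d → ℝ)).prod
    (((volume : Measure ℝ).restrict (Set.Ioi 0)).withDensity fun z => ENNReal.ofReal (z ^ a))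

/-- The mixed norm `‖Φ‖_{L^q_t L^r_x}`. -/
def mixNorm (d : ℕ) (q r : ℝ) (Φ : (Fin d → ℝ) → ℝ → ℂ) : ℝ≥0∞ :=
  (∫⁻ t : ℝ, (∫⁻ x : Fin d → ℝ, (‖Φ x t‖₊ : ℝ≥0∞) ^ r) ^ (q / r)) ^ (1 / q)

/-- The mixed norm `‖Φ‖_{L^q_T L^r_x}` over the time interval `[0,T]`. -/
def mixNormT (d : ℕ) (T q r : ℝ) (Φ : (Fin d → ℝ) → ℝ → ℂ) : ℝ≥0∞ :=
  (∫⁻ t in Set.Ioc (0 : ℝ) T, (∫⁻ x : Fin d → ℝ, (‖Φ x t‖₊ : ℝ≥0∞) ^ r) ^ (q / r)) ^ (1 / q)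

/-- The homogeneous propagator `𝕋_a^*(u₀)`. -/
def Tstar (d : ℕ) (a : ℝ) (u₀ : (Fin d → ℝ) × ℝ → ℂ) (X : (Fin d → ℝ) × ℝ) (t : ℝ) : ℂ :=
  if t = 0 then u₀ X else ∫ Y, SK d a X Y t * u₀ Y ∂(ωa d a)

/-- The inhomogeneous Duhamel term `𝔻_a(F)`. -/
def Dop (d : ℕ) (a : ℝ) (F : (Fin d → ℝ) × ℝ → ℝ → ℂ) (X : (Fin d → ℝ) × ℝ) (t : ℝ) : ℂ :=
  ∫ τ in (0 : ℝ)..t, ∫ Y, SK d a X Y (t - τ) * F Y τ ∂(ωa d a)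

/-- The boundary-data operator `Θ_a^*(Φ)`. -/
def ThetaStar (d : ℕ) (a : ℝ) (Φ : (Fin d → ℝ) → ℝ → ℂ) (X : (Fin d → ℝ) × ℝ) (t : ℝ) : ℂ :=
  Complex.I *
    ∫ τ in (0 : ℝ)..t, ∫ y : Fin d → ℝ, Sa0 a X.2 (t - τ) * Sfree d X.1 y (t - τ) * Φ y τ

/-- The weight `k(z) = min{1, z^{a/2}}`. -/
def kwt (a z : ℝ) : ℝ := min 1 (z ^ (a / 2))

/-- The weight `k^{-1}(z) = max{1, z^{-a/2}}`. -/
def kinv (a z : ℝ) : ℝ := max 1 (z ^ (-a / 2))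

/-! The Schrödinger kernel is the boundary value at `w = i t` of the kernel `K_w` of the heat
semigroup in complex time `w`. For `Re w > 0` this kernel is symmetric, satisfies
`conj K_w = K_{conj w}` and has the semigroup property; in the Bessel variable the latter is Weber's
second exponential integral. Hence, for the regularised operator `T_ε` with kernel `K_{ε - i t}`,
the `T T*` argument turns `‖T_ε F‖²` into the bilinear form with kernel `K_{2 ε - i (t - s)}`.
Between two fixed times this form is bounded on `L² × L²` by contractivity of the semigroup, and on
`L¹ × L¹` by the dispersive bound `|K_w| ≤ C |w| ^ (-(d + a + 1) / 2)`. The Bessel part of this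
bound is an energy estimate for the differential equation of the Bessel function; it holds up to the
boundary of the half-plane because `a ≥ 0`. Interpolating with the three lines theorem gives an
`L^{r'}` bound with constant `C |t - s| ^ (-2 / q)`, and the Hardy–Littlewood–Sobolev inequality
integrates it in time. Neither the regularisation nor a truncation to times away from zero enters
the constants, so both are removed by Fatou's lemma. -/

section DualStrichartz

open Set
open scoped ComplexConjugate ComplexOrder Real

/-! ### The Bessel–Clifford function -/

/-- The Taylor coefficients `1 / (m! Γ(m + s))` of the Bessel–Clifford function. -/
def besselCliffordCoeff (s : ℝ) (m : ℕ) : ℝ := (m.factorial * Real.Gamma (m + s))⁻¹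

/-- The Bessel–Clifford function `C_s(v) = ∑ v ^ m / (m! Γ(m + s))`, which is the entire function
`₀F₁(s; v) / Γ(s)`. It carries the Bessel function without its branch point:
`J_ν(x) = (x / 2) ^ ν * C_{ν + 1}(-x ^ 2 / 4)`. -/
def besselClifford (s : ℝ) : ℂ → ℂ := regularizedHGFun 0 {(s : ℂ)}

section BesselClifford

variable {s : ℝ}

lemma besselCliffordCoeff_pos (hs : 0 < s) (m : ℕ) : 0 < besselCliffordCoeff s m := by
  have := Real.Gamma_pos_of_pos (show 0 < m + s by positivity)
  unfold besselCliffordCoeff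
  positivity

lemma succ_mul_besselCliffordCoeff_succ (s : ℝ) (m : ℕ) :
    (m + 1) * besselCliffordCoeff s (m + 1) = besselCliffordCoeff (s + 1) m := by
  have harg : ((m + 1 : ℕ) : ℝ) + s = m + (s + 1) := by push_cast; ring
  rw [besselCliffordCoeff, besselCliffordCoeff, harg, Nat.factorial_succ]
  push_cast
  field_simp

lemma add_mul_besselCliffordCoeff_add_one (hs : 0 < s) (m : ℕ) :
    (m + s) * besselCliffordCoeff (s + 1) m = besselCliffordCoeff s m := by
  have hms : (m : ℝ) + s ≠ 0 := by positivity
  rw [besselCliffordCoeff, besselCliffordCoeff, ← add_assoc, Real.Gamma_add_one hms]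
  field_simp

lemma regularizedHGFunCoeff_zero_singleton (s : ℝ) (m : ℕ) :
    regularizedHGFunCoeff 0 {(s : ℂ)} m = besselCliffordCoeff s m := by
  simp only [regularizedHGFunCoeff, besselCliffordCoeff, Multiset.map_zero, Multiset.prod_zero,
    Multiset.map_singleton, Multiset.prod_singleton, one_div, ofReal_inv, ofReal_mul,
    ofReal_natCast, ← Complex.Gamma_ofReal, ofReal_add, add_comm (s : ℂ)]

lemma regularizedHGFunSeries_zero_singleton_apply (s : ℝ) (v : ℂ) (m : ℕ) :
    regularizedHGFunSeries 0 {(s : ℂ)} m (fun _ => v) = besselCliffordCoeff s m * v ^ m := by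
  rw [regularizedHGFunSeries, FormalMultilinearSeries.ofScalars_apply_eq,
    regularizedHGFunCoeff_zero_singleton, smul_eq_mul]

lemma mem_eball_radius_regularizedHGFunSeries_zero_singleton (s : ℝ) (v : ℂ) :
    v ∈ Metric.eball 0 (regularizedHGFunSeries 0 {(s : ℂ)}).radius := by
  simp [radius_regularizedHGFunSeries_eq_top (a := 0) (b := {(s : ℂ)}) (by simp)]

lemma summable_norm_besselClifford (s : ℝ) (v : ℂ) :
    Summable fun m => ‖(besselCliffordCoeff s m : ℂ) * v ^ m‖ := by
  simpa only [regularizedHGFunSeries_zero_singleton_apply] using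
    FormalMultilinearSeries.summable_norm_apply _
      (mem_eball_radius_regularizedHGFunSeries_zero_singleton s v)

lemma hasSum_besselClifford (s : ℝ) (v : ℂ) :
    HasSum (fun m => (besselCliffordCoeff s m : ℂ) * v ^ m) (besselClifford s v) := by
  have h := FormalMultilinearSeries.hasSum _
    (mem_eball_radius_regularizedHGFunSeries_zero_singleton s v)
  simp only [regularizedHGFunSeries_zero_singleton_apply] at h
  exact h

lemma besselClifford_eq_tsum (s : ℝ) (v : ℂ) :
    besselClifford s v = ∑' m, (besselCliffordCoeff s m : ℂ) * v ^ m :=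
  (hasSum_besselClifford s v).tsum_eq.symm

lemma succ_mul_besselCliffordCoeff_succ_ofReal (s : ℝ) (m : ℕ) :
    ((m + 1 : ℕ) : ℂ) * besselCliffordCoeff s (m + 1) = besselCliffordCoeff (s + 1) m := by
  exact_mod_cast succ_mul_besselCliffordCoeff_succ s m

lemma hasSum_deriv_besselClifford (s : ℝ) (v : ℂ) :
    HasSum (fun m : ℕ => (besselCliffordCoeff s m : ℂ) * (m * v ^ (m - 1)))
      (besselClifford (s + 1) v) := by
  rw [← hasSum_nat_add_iff' 1]
  simp only [Finset.sum_range_one, Nat.cast_zero, zero_mul, mul_zero, sub_zero,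
    Nat.add_sub_cancel]
  refine (hasSum_besselClifford (s + 1) v).congr_fun fun m => ?_
  rw [← succ_mul_besselCliffordCoeff_succ_ofReal]
  ring

lemma hasDerivAt_besselClifford (s : ℝ) (v : ℂ) :
    HasDerivAt (besselClifford s) (besselClifford (s + 1) v) v := by
  set R : ℝ := ‖v‖ + 1
  have hbound : Summable fun m : ℕ => ‖(besselCliffordCoeff s m : ℂ)‖ * (m * R ^ (m - 1)) := by
    rw [← summable_nat_add_iff 1]
    refine (summable_norm_besselClifford (s + 1) R).congr fun m => ?_
    have hR : ‖(R : ℂ)‖ = R := Complex.norm_of_nonneg (by positivity)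
    rw [← succ_mul_besselCliffordCoeff_succ_ofReal, Nat.add_sub_cancel, norm_mul, norm_mul,
      norm_pow, hR, Complex.norm_natCast]
    ring
  rw [← (hasSum_deriv_besselClifford s v).tsum_eq, funext (besselClifford_eq_tsum s)]
  refine hasDerivAt_tsum_of_isPreconnected (t := Metric.ball 0 R) (y₀ := v) hbound
    Metric.isOpen_ball (convex_ball (0 : ℂ) R).isPreconnected
    (fun m y _ => (hasDerivAt_pow m y).const_mul _) (fun m y hy => ?_) ?_
    (hasSum_besselClifford s v).summable ?_
  · have hy : ‖y‖ ≤ R := (mem_ball_zero_iff.1 hy).le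
    rw [norm_mul, norm_mul, norm_pow, Complex.norm_natCast]
    gcongr
  all_goals simp [R]

lemma continuous_besselClifford (s : ℝ) : Continuous (besselClifford s) :=
  continuous_iff_continuousAt.2 fun v => (hasDerivAt_besselClifford s v).continuousAt

lemma besselClifford_recurrence (hs : 0 < s) (v : ℂ) :
    v * besselClifford (s + 1 + 1) v + s * besselClifford (s + 1) v = besselClifford s v := by
  refine (((hasSum_deriv_besselClifford (s + 1) v).mul_left v).add
    ((hasSum_besselClifford (s + 1) v).mul_left (s : ℂ))).unique
    ((hasSum_besselClifford s v).congr_fun fun m => ?_)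
  rw [← add_mul_besselCliffordCoeff_add_one hs m]
  rcases m with _ | m <;> push_cast [Nat.add_sub_cancel] <;> ring

lemma besselClifford_zero (s : ℝ) : besselClifford s 0 = ((Real.Gamma s)⁻¹ : ℝ) := by
  rw [besselClifford_eq_tsum, tsum_eq_single 0 fun m hm => by simp [hm]]
  simp [besselCliffordCoeff]

lemma conj_besselClifford (s : ℝ) (v : ℂ) :
    conj (besselClifford s v) = besselClifford s (conj v) := by
  simp_rw [besselClifford_eq_tsum, conj_tsum, map_mul, map_pow, conj_ofReal]

lemma besselClifford_pos (hs : 0 < s) {v : ℂ} (hv : 0 ≤ v) : 0 < besselClifford s v := by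
  have hcoeff (m : ℕ) : 0 < (besselCliffordCoeff s m : ℂ) :=
    mod_cast besselCliffordCoeff_pos hs m
  rw [besselClifford_eq_tsum]
  exact (hasSum_besselClifford s v).summable.tsum_pos
    (fun m => mul_nonneg (hcoeff m).le (pow_nonneg hv m)) 0 (by simpa using hcoeff 0)

end BesselClifford

section EnergyBound

lemma le_mul_exp_of_deriv_le_mul {N N' : ℝ → ℝ} {K : ℝ} (hN : ∀ τ, HasDerivAt N (N' τ) τ)
    (hN' : ∀ τ, 0 ≤ τ → N' τ ≤ K * N τ) {τ : ℝ} (hτ : 0 ≤ τ) : N τ ≤ N 0 * Real.exp (K * τ) := by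
  have h := le_gronwallBound_of_liminf_deriv_right_le (f := N) (f' := N') (δ := N 0) (K := K)
    (ε := 0) (a := 0) (b := τ) (fun x _ => (hN x).continuousAt.continuousWithinAt)
    (fun x _ r hr => by
      simpa only [slope_def_field, div_eq_inv_mul] using
        (hN x).hasDerivWithinAt.liminf_right_slope_le hr)
    le_rfl (fun x hx => by simpa using hN' x hx.1) τ (right_mem_Icc.2 hτ)
  simpa [gronwallBound_ε0] using h

lemma inner_mul_add_inner_mul_le (x f g : ℂ) :
    inner ℝ f (x * g) + inner ℝ g (x * f) ≤ |x.re| * (‖f‖ ^ 2 + ‖g‖ ^ 2) := by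
  have hsum : inner ℝ f (x * g) + inner ℝ g (x * f) = 2 * (x.re * inner ℝ f g) := by
    simp only [Complex.inner, mul_re, mul_im, conj_re, conj_im]
    ring
  have hcs : x.re * inner ℝ f g ≤ |x.re| * (‖f‖ * ‖g‖) := by
    refine (le_abs_self _).trans ?_
    rw [abs_mul]
    gcongr
    exact abs_real_inner_le_norm f g
  nlinarith [mul_nonneg (abs_nonneg x.re) (sq_nonneg (‖f‖ - ‖g‖))]

variable {s : ℝ}

lemma hasDerivAt_besselClifford_ray (s : ℝ) (x : ℂ) (τ : ℝ) :
    HasDerivAt (fun τ : ℝ => besselClifford s ((τ * x) ^ 2 / 4))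
      (x * (τ * x / 2 * besselClifford (s + 1) ((τ * x) ^ 2 / 4))) τ := by
  have hray : HasDerivAt (fun τ : ℝ => ((τ : ℂ) * x) ^ 2 / 4) (τ * x * x / 2) τ :=
    ((((hasDerivAt_id τ).ofReal_comp.mul_const x).pow 2).div_const 4).congr_deriv (by simp; ring)
  exact ((hasDerivAt_besselClifford s _).comp τ hray).congr_deriv (by ring)

lemma hasDerivAt_mul_besselClifford_ray (hs : 0 < s) (x : ℂ) (τ : ℝ) :
    HasDerivAt (fun τ : ℝ => τ * x / 2 * besselClifford (s + 1) ((τ * x) ^ 2 / 4))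
      (x * (besselClifford s ((τ * x) ^ 2 / 4) -
        ((s - 1 / 2 : ℝ) : ℂ) * besselClifford (s + 1) ((τ * x) ^ 2 / 4))) τ := by
  have hlin : HasDerivAt (fun τ : ℝ => (τ : ℂ) * x / 2) (x / 2) τ :=
    (((hasDerivAt_id τ).ofReal_comp.mul_const x).div_const 2).congr_deriv (by simp)
  refine (hlin.mul (hasDerivAt_besselClifford_ray (s + 1) x τ)).congr_deriv ?_
  rw [← besselClifford_recurrence hs]
  push_cast
  ring

/-- The energy `|f|² + |g|²` of the pair `f(τ) = C_s((τx)²/4)`, `g(τ) = (τx/2) C_{s+1}((τx)²/4)`,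
which solves a first order system along the ray `ℝ x`. -/
def besselCliffordEnergy (s : ℝ) (x : ℂ) (τ : ℝ) : ℝ :=
  ‖besselClifford s ((τ * x) ^ 2 / 4)‖ ^ 2 +
    ‖τ * x / 2 * besselClifford (s + 1) ((τ * x) ^ 2 / 4)‖ ^ 2

lemma besselCliffordEnergy_zero (s : ℝ) (x : ℂ) :
    besselCliffordEnergy s x 0 = (Real.Gamma s)⁻¹ ^ 2 := by
  simp [besselCliffordEnergy, besselClifford_zero]

lemma besselCliffordEnergy_le (hs : 1 / 2 ≤ s) (x : ℂ) {τ : ℝ} (hτ : 0 ≤ τ) :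
    besselCliffordEnergy s x τ ≤ (Real.Gamma s)⁻¹ ^ 2 * Real.exp (2 * |x.re| * τ) := by
  have hs0 : 0 < s := by linarith
  rw [← besselCliffordEnergy_zero s x]
  have hderiv (τ : ℝ) : HasDerivAt (besselCliffordEnergy s x) _ τ :=
    (hasDerivAt_besselClifford_ray s x τ).norm_sq.add
      (hasDerivAt_mul_besselClifford_ray hs0 x τ).norm_sq
  refine le_mul_exp_of_deriv_le_mul hderiv (fun τ hτ => ?_) hτ
  rw [besselCliffordEnergy]
  set f := besselClifford s ((τ * x) ^ 2 / 4)
  set h := besselClifford (s + 1) ((τ * x) ^ 2 / 4)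
  have hdamp : 0 ≤ inner ℝ (τ * x / 2 * h) (x * (((s - 1 / 2 : ℝ) : ℂ) * h)) := by
    have : (x * (((s - 1 / 2 : ℝ) : ℂ) * h)) * conj (τ * x / 2 * h) =
        (((s - 1 / 2) * (τ / 2) * (normSq x * normSq h) : ℝ) : ℂ) := by
      push_cast [← Complex.mul_conj, map_mul, map_div₀, conj_ofReal, map_ofNat]
      ring
    rw [Complex.inner, this, ofReal_re]
    have := sub_nonneg.2 hs
    have := normSq_nonneg x
    have := normSq_nonneg h
    positivity
  have hmain := inner_mul_add_inner_mul_le x f (τ * x / 2 * h)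
  rw [mul_sub x, inner_sub_right]
  linarith

-- For `x = i y` the bound is uniform in `y`: this is where the dispersive estimate comes from.
lemma norm_besselClifford_sq_div_four_le (hs : 1 / 2 ≤ s) (x : ℂ) :
    ‖besselClifford s (x ^ 2 / 4)‖ ≤ (Real.Gamma s)⁻¹ * Real.exp |x.re| := by
  have := Real.Gamma_pos_of_pos (show 0 < s by linarith)
  refine (sq_le_sq₀ (norm_nonneg _) (by positivity)).1 ?_
  calc ‖besselClifford s (x ^ 2 / 4)‖ ^ 2
      ≤ besselCliffordEnergy s x 1 := by
        rw [besselCliffordEnergy, ofReal_one, one_mul]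
        exact le_add_of_nonneg_right (sq_nonneg _)
    _ ≤ (Real.Gamma s)⁻¹ ^ 2 * Real.exp (2 * |x.re| * 1) := besselCliffordEnergy_le hs x zero_le_one
    _ = ((Real.Gamma s)⁻¹ * Real.exp |x.re|) ^ 2 := by
        rw [mul_pow, ← Real.exp_nat_mul]
        norm_num

end EnergyBound

/-! ### Weber's second exponential integral -/

section ExponentialFamily

variable {α : Type*} [MeasurableSpace α] {μ : Measure α} {c : α → ℂ} {X : α → ℝ} {t₀ t₁ : ℝ}

lemma norm_mul_cexp_mul_ofReal (c z : ℂ) (x : ℝ) :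
    ‖c * cexp (z * x)‖ = ‖c‖ * Real.exp (z.re * x) := by
  rw [norm_mul, norm_exp, re_mul_ofReal]

lemma abs_mul_exp_mul_le {δ t x : ℝ} (hδ : 0 < δ) (h₀ : t₀ + δ ≤ t) (h₁ : t ≤ t₁ - δ) :
    |x| * Real.exp (t * x) ≤ δ⁻¹ * (Real.exp (t₀ * x) + Real.exp (t₁ * x)) := by
  have hx : |x| ≤ δ⁻¹ * Real.exp (δ * |x|) := by
    rw [le_inv_mul_iff₀ hδ]
    linarith [Real.add_one_le_exp (δ * |x|)]
  have hmax : Real.exp (δ * |x| + t * x) ≤ Real.exp (t₀ * x) + Real.exp (t₁ * x) := by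
    rcases abs_cases x with ⟨h, hx⟩ | ⟨h, hx⟩ <;> rw [h]
    · have : δ * x + t * x ≤ t₁ * x := by nlinarith
      linarith [Real.exp_le_exp.2 this, Real.exp_pos (t₀ * x)]
    · have : δ * -x + t * x ≤ t₀ * x := by nlinarith
      linarith [Real.exp_le_exp.2 this, Real.exp_pos (t₁ * x)]
  calc |x| * Real.exp (t * x) ≤ δ⁻¹ * Real.exp (δ * |x|) * Real.exp (t * x) := by gcongr
    _ = δ⁻¹ * Real.exp (δ * |x| + t * x) := by rw [mul_assoc, Real.exp_add]
    _ ≤ _ := by gcongr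

lemma hasDerivAt_integral_mul_cexp (hc : AEStronglyMeasurable c μ) (hX : AEMeasurable X μ)
    (h₀ : Integrable (fun a => ‖c a‖ * Real.exp (t₀ * X a)) μ)
    (h₁ : Integrable (fun a => ‖c a‖ * Real.exp (t₁ * X a)) μ) {z : ℂ}
    (hz₀ : t₀ < z.re) (hz₁ : z.re < t₁) :
    HasDerivAt (fun z => ∫ a, c a * cexp (z * X a) ∂μ)
      (∫ a, c a * (cexp (z * X a) * X a) ∂μ) z := by
  obtain ⟨δ, hδ, hδ₀, hδ₁⟩ : ∃ δ > 0, t₀ + 2 * δ ≤ z.re ∧ z.re ≤ t₁ - 2 * δ :=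
    ⟨min (z.re - t₀) (t₁ - z.re) / 2, by simp [hz₀, hz₁],
      by linarith [min_le_left (z.re - t₀) (t₁ - z.re)],
      by linarith [min_le_right (z.re - t₀) (t₁ - z.re)]⟩
  have hmeas (w : ℂ) : AEStronglyMeasurable (fun a => c a * cexp (w * X a)) μ :=
    hc.mul (AEMeasurable.aestronglyMeasurable (by fun_prop))
  have hbound (w : ℂ) (hw : w ∈ Metric.ball z δ) (a : α) : ‖c a * (cexp (w * X a) * X a)‖ ≤
      δ⁻¹ * (‖c a‖ * Real.exp (t₀ * X a) + ‖c a‖ * Real.exp (t₁ * X a)) := by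
    have hre : |w.re - z.re| < δ := (abs_re_le_norm (w - z)).trans_lt (mem_ball_iff_norm.1 hw)
    rw [abs_lt] at hre
    rw [← mul_assoc, norm_mul, norm_mul_cexp_mul_ofReal, norm_real, Real.norm_eq_abs, mul_assoc,
      mul_comm (Real.exp _), ← mul_add, mul_left_comm δ⁻¹]
    exact mul_le_mul_of_nonneg_left (abs_mul_exp_mul_le hδ (by linarith) (by linarith))
      (norm_nonneg _)
  refine (hasDerivAt_integral_of_dominated_loc_of_deriv_le (Metric.ball_mem_nhds z hδ)
    (.of_forall hmeas) ?_ (hc.mul (AEMeasurable.aestronglyMeasurable (by fun_prop)))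
    (.of_forall fun a w hw => hbound w hw a) ((h₀.add h₁).const_mul δ⁻¹)
    (.of_forall fun a w _ => ?_)).2
  · refine (h₀.add h₁).mono' (hmeas z) (.of_forall fun a => ?_)
    rw [norm_mul_cexp_mul_ofReal, Pi.add_apply, ← mul_add]
    gcongr
    rcases le_total 0 (X a) with hXa | hXa
    · have : z.re * X a ≤ t₁ * X a := by gcongr
      linarith [Real.exp_le_exp.2 this, Real.exp_pos (t₀ * X a)]
    · have : z.re * X a ≤ t₀ * X a := mul_le_mul_of_nonpos_right hz₀.le hXa
      linarith [Real.exp_le_exp.2 this, Real.exp_pos (t₁ * X a)]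
  · simpa using ((hasDerivAt_mul_const (X a : ℂ)).cexp.const_mul (c a))

end ExponentialFamily

lemma norm_rpow_mul_cexp_neg_mul_sq (u : ℝ) (p : ℂ) {z : ℝ} (hz : 0 < z) :
    ‖((z ^ u : ℝ) : ℂ) * cexp (-p * z ^ 2)‖ =
      z ^ u * Real.exp (-p.re * z ^ 2) := by
  have hre : (-p * (z : ℂ) ^ 2).re = -p.re * z ^ 2 := by
    rw [← ofReal_pow, re_mul_ofReal, neg_re]
  rw [norm_mul, norm_exp, hre, Complex.norm_of_nonneg (by positivity)]

lemma integrableOn_rpow_mul_cexp_neg_mul_sq {u : ℝ} (hu : -1 < u) {p : ℂ} (hp : 0 < p.re) :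
    IntegrableOn (fun z : ℝ => ((z ^ u : ℝ) : ℂ) * cexp (-p * z ^ 2)) (Ioi 0) := by
  refine (integrableOn_rpow_mul_exp_neg_mul_sq hp hu).mono'
    (Measurable.aestronglyMeasurable (by fun_prop)) ?_
  filter_upwards [ae_restrict_mem measurableSet_Ioi] with z hz
  exact (norm_rpow_mul_cexp_neg_mul_sq u p hz).le

-- Both sides are holomorphic on the right half-plane and agree for real `p`.
lemma integral_rpow_mul_cexp_neg_mul_sq {u : ℝ} (hu : 0 < u) {p : ℂ} (hp : 0 < p.re) :
    ∫ z in Ioi (0 : ℝ), ((z ^ (2 * u - 1) : ℝ) : ℂ) * cexp (-p * z ^ 2) =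
      1 / 2 * (Real.Gamma u * p ^ (-(u : ℂ))) := by
  have hU : IsOpen {p : ℂ | 0 < p.re} := isOpen_lt continuous_const continuous_re
  have hint (b : ℝ) (hb : 0 < b) : Integrable (fun z : ℝ => ‖((z ^ (2 * u - 1) : ℝ) : ℂ)‖ *
      Real.exp (b * -z ^ 2)) (volume.restrict (Ioi 0)) := by
    refine (integrableOn_rpow_mul_exp_neg_mul_sq hb (show -1 < 2 * u - 1 by linarith)).congr ?_
    filter_upwards [ae_restrict_mem measurableSet_Ioi] with z (hz : 0 < z)
    rw [Complex.norm_of_nonneg (by positivity), mul_neg, neg_mul]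
  have hleft : DifferentiableOn ℂ (fun p : ℂ => ∫ z in Ioi (0 : ℝ),
      ((z ^ (2 * u - 1) : ℝ) : ℂ) * cexp (p * (-z ^ 2 : ℝ))) {p | 0 < p.re} :=
    fun p (hp : 0 < p.re) => (hasDerivAt_integral_mul_cexp
      (Measurable.aestronglyMeasurable (by fun_prop)) (Measurable.aemeasurable (by fun_prop))
      (hint (p.re / 2) (by linarith)) (hint (2 * p.re) (by linarith)) (by linarith)
      (by linarith)).differentiableAt.differentiableWithinAt
  have hright : DifferentiableOn ℂ (fun p : ℂ => 1 / 2 * (Real.Gamma u * p ^ (-(u : ℂ))))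
      {p | 0 < p.re} := fun p hp => DifferentiableAt.differentiableWithinAt <|
    ((differentiableAt_id.cpow_const (.inl hp)).const_mul _).const_mul _
  have hreal (b : ℝ) (hb : 0 < b) : ∫ z in Ioi (0 : ℝ), ((z ^ (2 * u - 1) : ℝ) : ℂ) *
      cexp (b * (-z ^ 2 : ℝ)) = 1 / 2 * (Real.Gamma u * (b : ℂ) ^ (-(u : ℂ))) := by
    have h := _root_.integral_rpow_mul_exp_neg_mul_rpow two_pos (q := 2 * u - 1) (by linarith) hb
    rw [show -(2 * u - 1 + 1) / 2 = -u by ring, show (2 * u - 1 + 1) / 2 = u by ring] at h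
    rw [← ofReal_neg, ← ofReal_cpow hb.le, mul_comm (Real.Gamma u : ℂ), ← mul_assoc,
      mul_comm (1 / 2 : ℂ)]
    rw [← ofReal_one, ← ofReal_ofNat 2, ← ofReal_div, ← ofReal_mul, ← ofReal_mul, ← h,
      ← integral_complex_ofReal]
    simp
  have hfreq : ∃ᶠ p in 𝓝[≠] (1 : ℂ), ∫ z in Ioi (0 : ℝ), ((z ^ (2 * u - 1) : ℝ) : ℂ) *
      cexp (p * (-z ^ 2 : ℝ)) = 1 / 2 * (Real.Gamma u * p ^ (-(u : ℂ))) := by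
    have htendsto : Tendsto ofReal (𝓝[≠] (1 : ℝ)) (𝓝[≠] ((1 : ℝ) : ℂ)) :=
      continuous_ofReal.continuousAt.continuousWithinAt.tendsto_nhdsWithin
        fun b hb => ofReal_injective.ne hb
    refine htendsto.frequently (Eventually.frequently ?_)
    filter_upwards [nhdsWithin_le_nhds (Ioi_mem_nhds one_pos)] with b hb using hreal b hb
  have h := (hleft.analyticOnNhd hU).eqOn_of_preconnected_of_frequently_eq
    (hright.analyticOnNhd hU) (convex_halfSpace_re_gt 0).isPreconnected
    (show (0 : ℝ) < (1 : ℂ).re by simp) hfreq hp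
  simpa using h

lemma ascPochhammer_eval_mul_Gamma {x : ℝ} (hx : 0 < x) (n : ℕ) :
    (ascPochhammer ℝ n).eval x * Real.Gamma x = Real.Gamma (x + n) := by
  induction n with
  | zero => simp
  | succ n ih =>
    rw [ascPochhammer_succ_eval, mul_right_comm, ih, Nat.cast_succ, ← add_assoc,
      Real.Gamma_add_one (by positivity), mul_comm]

lemma ring_multichoose_eq_Gamma_div {x : ℝ} (hx : 0 < x) (n : ℕ) :
    Ring.multichoose x n = Real.Gamma (x + n) / (n.factorial * Real.Gamma x) := by
  have hΓ := (Real.Gamma_pos_of_pos hx).ne'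
  rw [← ascPochhammer_eval_mul_Gamma hx, ← Polynomial.ascPochhammer_smeval_eq_eval,
    ← Ring.factorial_nsmul_multichoose_eq_ascPochhammer, nsmul_eq_mul]
  field_simp

section Weber

variable {s : ℝ}

-- The Chu–Vandermonde identity for the upper indices `k` and `j + s - 1`.
lemma sum_choose_mul_choose_mul_factorial_div_Gamma (hs : 0 < s) (j k : ℕ) :
    ∑ m ∈ Finset.range (j + 1), (j.choose m * k.choose m * m.factorial : ℝ) / Real.Gamma (m + s) =
      Real.Gamma (j + k + s) / (Real.Gamma (j + s) * Real.Gamma (k + s)) := by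
  have hΓ (n : ℕ) : Real.Gamma (n + s) ≠ 0 := (Real.Gamma_pos_of_pos (by positivity)).ne'
  have hfull : Ring.choose ((k : ℝ) + (j + s - 1)) j =
      Real.Gamma (j + k + s) / (j.factorial * Real.Gamma (k + s)) := by
    have h := ring_multichoose_eq_Gamma_div (show 0 < (k : ℝ) + s by positivity) j
    rw [Ring.multichoose_eq] at h
    convert h using 2 <;> ring_nf
  have hsplit (m l : ℕ) (hml : m + l = j) : Ring.choose ((j : ℝ) + s - 1) l =
      Real.Gamma (j + s) / (l.factorial * Real.Gamma (m + s)) := by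
    have h := ring_multichoose_eq_Gamma_div (show 0 < (m : ℝ) + s by positivity) l
    rw [Ring.multichoose_eq] at h
    rw [← hml]
    convert h using 2 <;> push_cast <;> ring_nf
  have hvan := Ring.add_choose_eq j (Commute.all (k : ℝ) (j + s - 1))
  rw [hfull, Finset.Nat.sum_antidiagonal_eq_sum_range_succ
    (fun m l => Ring.choose (k : ℝ) m * Ring.choose ((j : ℝ) + s - 1) l)] at hvan
  have hj := hΓ j
  have hk := hΓ k
  calc _ = j.factorial / Real.Gamma (j + s) *
        ∑ m ∈ Finset.range (j + 1),
          Ring.choose (k : ℝ) m * Ring.choose ((j : ℝ) + s - 1) (j - m) := by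
        rw [Finset.mul_sum]
        refine Finset.sum_congr rfl fun m hm => ?_
        have hmj : m ≤ j := Finset.mem_range_succ_iff.1 hm
        rw [hsplit m _ (Nat.add_sub_cancel' hmj), Ring.choose_natCast,
          ← Nat.choose_mul_factorial_mul_factorial hmj]
        have := hΓ m
        push_cast
        field_simp
    _ = _ := by
        rw [← hvan]
        field_simp

lemma hasSum_Gamma_mul_besselCliffordCoeff (hs : 0 < s) (A B : ℂ) :
    HasSum (fun n : ℕ × ℕ => ((Real.Gamma (n.1 + n.2 + s) *
      (besselCliffordCoeff s n.1 * besselCliffordCoeff s n.2) : ℝ) : ℂ) * (A ^ n.1 * B ^ n.2))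
      (cexp A * cexp B * besselClifford s (A * B)) := by
  have hexp (x : ℂ) : HasSum (fun n : ℕ => x ^ n / n.factorial) (cexp x) := by
    rw [Complex.exp_eq_exp_ℂ]
    exact NormedSpace.expSeries_div_hasSum_exp x
  have hexp_norm (x : ℂ) := NormedSpace.norm_expSeries_div_summable x
  have hAB := (hexp_norm A).mul_norm (hexp_norm B)
  have hprod := ((hexp A).mul (hexp B) hAB.of_norm).mul (hasSum_besselClifford s (A * B))
    (hAB.mul_norm (summable_norm_besselClifford s (A * B))).of_norm
  let φ : (ℕ × ℕ) × ℕ → (ℕ × ℕ) × ℕ := fun n => ((n.1.1 + n.2, n.1.2 + n.2), n.2)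
  let G : (ℕ × ℕ) × ℕ → ℂ := fun n => (((n.1.1.choose n.2 * n.1.2.choose n.2 * n.2.factorial : ℝ) /
    Real.Gamma (n.2 + s) / (n.1.1.factorial * n.1.2.factorial) : ℝ) : ℂ) * (A ^ n.1.1 * B ^ n.1.2)
  have hφ : Function.Injective φ := by
    rintro ⟨⟨i, l⟩, m⟩ ⟨⟨i', l'⟩, m'⟩ h
    simp only [φ, Prod.mk.injEq] at h ⊢
    omega
  have hGφ (n : (ℕ × ℕ) × ℕ) : G (φ n) = A ^ n.1.1 / n.1.1.factorial *
      (B ^ n.1.2 / n.1.2.factorial) * (besselCliffordCoeff s n.2 * (A * B) ^ n.2) := by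
    have hΓ : (Real.Gamma (n.2 + s) : ℂ) ≠ 0 :=
      ofReal_ne_zero.2 (Real.Gamma_pos_of_pos (by positivity)).ne'
    simp only [G, φ, besselCliffordCoeff, add_comm _ n.2, Nat.cast_add_choose]
    push_cast
    field_simp
    ring
  have hG : HasSum G (cexp A * cexp B * besselClifford s (A * B)) := by
    refine (hφ.hasSum_iff fun n hn => ?_).1 (hprod.congr_fun hGφ)
    have hn' : n.1.1 < n.2 ∨ n.1.2 < n.2 := by
      by_contra! h
      exact hn ⟨((n.1.1 - n.2, n.1.2 - n.2), n.2), by simp [φ, h]⟩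
    rcases hn' with h | h <;> simp [G, Nat.choose_eq_zero_of_lt h]
  refine hG.prod_fiberwise fun n => ?_
  have hsum : ((Real.Gamma (n.1 + n.2 + s) * (besselCliffordCoeff s n.1 *
      besselCliffordCoeff s n.2) : ℝ) : ℂ) * (A ^ n.1 * B ^ n.2) =
      ∑ m ∈ Finset.range (n.1 + 1), G (n, m) := by
    simp only [G]
    rw [← Finset.sum_mul, ← ofReal_sum, ← Finset.sum_div,
      sum_choose_mul_choose_mul_factorial_div_Gamma hs, besselCliffordCoeff, besselCliffordCoeff]
    congr 2
    field_simp
  rw [hsum]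
  refine hasSum_sum_of_ne_finset_zero fun m hm => ?_
  simp [G, Nat.choose_eq_zero_of_lt (by simpa using hm)]

/-- The terms of the double series obtained by expanding both Bessel–Clifford functions in the
integrand of Weber's second exponential integral. -/
def weberTerm (s : ℝ) (p α β : ℂ) (n : ℕ × ℕ) (z : ℝ) : ℂ :=
  (besselCliffordCoeff s n.1 * besselCliffordCoeff s n.2 : ℝ) * (α ^ n.1 * β ^ n.2) *
    ((z ^ (2 * (n.1 + n.2 + s) - 1) : ℝ) * cexp (-p * z ^ 2))

lemma integrableOn_weberTerm (hs : 0 < s) {p : ℂ} (hp : 0 < p.re) (α β : ℂ) (n : ℕ × ℕ) :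
    IntegrableOn (weberTerm s p α β n) (Ioi 0) := by
  refine (integrableOn_rpow_mul_cexp_neg_mul_sq ?_ hp).const_mul _
  have : 0 < n.1 + n.2 + s := by positivity
  linarith

lemma integral_weberTerm (hs : 0 < s) {p : ℂ} (hp : 0 < p.re) (α β : ℂ) (n : ℕ × ℕ) :
    ∫ z in Ioi (0 : ℝ), weberTerm s p α β n z = 1 / 2 * p ^ (-(s : ℂ)) *
      (((Real.Gamma (n.1 + n.2 + s) * (besselCliffordCoeff s n.1 *
        besselCliffordCoeff s n.2) : ℝ) : ℂ) * ((α / p) ^ n.1 * (β / p) ^ n.2)) := by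
  have hp0 : p ≠ 0 := by
    rintro rfl
    exact hp.ne rfl
  have hpow : p ^ (-((n.1 + n.2 + s : ℝ) : ℂ)) = p ^ (-(s : ℂ)) * (p⁻¹ ^ n.1 * p⁻¹ ^ n.2) := by
    rw [show -((n.1 + n.2 + s : ℝ) : ℂ) = -(s : ℂ) + -((n.1 + n.2 : ℕ) : ℂ) by push_cast; ring,
      cpow_add _ _ hp0, cpow_neg _ ((n.1 + n.2 : ℕ) : ℂ), cpow_natCast, ← pow_add, inv_pow]
  simp only [weberTerm]
  rw [integral_const_mul, integral_rpow_mul_cexp_neg_mul_sq (by positivity) hp, hpow]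
  simp only [div_eq_mul_inv, mul_pow]
  push_cast
  ring

lemma norm_weberTerm (hs : 0 < s) (p α β : ℂ) (n : ℕ × ℕ) {z : ℝ} (hz : 0 < z) :
    (‖weberTerm s p α β n z‖ : ℂ) = weberTerm s p.re ‖α‖ ‖β‖ n z := by
  have hj := besselCliffordCoeff_pos hs n.1
  have hk := besselCliffordCoeff_pos hs n.2
  rw [weberTerm, weberTerm, norm_mul, norm_mul, norm_rpow_mul_cexp_neg_mul_sq _ _ hz,
    Complex.norm_of_nonneg (by positivity), norm_mul, norm_pow, norm_pow]
  push_cast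
  rfl

lemma hasSum_weberTerm (s : ℝ) (p α β : ℂ) {z : ℝ} (hz : 0 < z) :
    HasSum (fun n => weberTerm s p α β n z) (((z ^ (2 * s - 1) : ℝ) : ℂ) * cexp (-p * z ^ 2) *
      (besselClifford s (α * z ^ 2) * besselClifford s (β * z ^ 2))) := by
  have hsummable := (summable_norm_besselClifford s (α * z ^ 2)).mul_norm
    (summable_norm_besselClifford s (β * z ^ 2))
  have hprod := (hasSum_besselClifford s (α * z ^ 2)).mul (hasSum_besselClifford s (β * z ^ 2))
    hsummable.of_norm
  refine (hprod.mul_left (((z ^ (2 * s - 1) : ℝ) : ℂ) * cexp (-p * z ^ 2))).congr_fun fun n => ?_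
  have hpow : z ^ (2 * (n.1 + n.2 + s) - 1) =
      z ^ (2 * s - 1) * ((z ^ 2) ^ n.1 * (z ^ 2) ^ n.2) := by
    rw [← pow_add, ← pow_mul, ← Real.rpow_natCast, ← Real.rpow_add hz]
    push_cast
    ring_nf
  rw [weberTerm, hpow]
  push_cast
  ring

theorem integral_mul_besselClifford_mul_besselClifford (hs : 0 < s) {p : ℂ} (hp : 0 < p.re)
    (α β : ℂ) :
    ∫ z in Ioi (0 : ℝ), ((z ^ (2 * s - 1) : ℝ) : ℂ) * cexp (-p * z ^ 2) *
      (besselClifford s (α * z ^ 2) * besselClifford s (β * z ^ 2)) =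
    1 / 2 * p ^ (-(s : ℂ)) *
      (cexp (α / p) * cexp (β / p) * besselClifford s (α / p * (β / p))) := by
  have hnorm (n : ℕ × ℕ) : ((∫ z in Ioi (0 : ℝ), ‖weberTerm s p α β n z‖ : ℝ) : ℂ) =
      ∫ z in Ioi (0 : ℝ), weberTerm s p.re ‖α‖ ‖β‖ n z := by
    rw [← integral_complex_ofReal]
    exact setIntegral_congr_fun measurableSet_Ioi fun z hz => norm_weberTerm hs p α β n hz
  have hsummable : Summable fun n => ∫ z in Ioi (0 : ℝ), ‖weberTerm s p α β n z‖ := by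
    rw [← summable_ofReal]
    simp_rw [hnorm, integral_weberTerm hs (show 0 < (p.re : ℂ).re from hp)]
    exact (hasSum_Gamma_mul_besselCliffordCoeff hs _ _).summable.mul_left _
  have h := hasSum_integral_of_summable_integral_norm
    (fun n => integrableOn_weberTerm hs hp α β n) hsummable
  simp_rw [integral_weberTerm hs hp] at h
  rw [((hasSum_Gamma_mul_besselCliffordCoeff hs _ _).mul_left _).unique h]
  exact setIntegral_congr_fun measurableSet_Ioi fun z hz =>
    (hasSum_weberTerm s p α β hz).tsum_eq.symm

end Weber

/-! ### The heat kernel in complex time -/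

/-- The Euclidean heat kernel on `ℝ^d` in complex time `w`. -/
def gaussKernel (d : ℕ) (w : ℂ) (x y : Fin d → ℝ) : ℂ :=
  (4 * π * w) ^ ((-(d / 2) : ℝ) : ℂ) * cexp (-(∑ i, (x i - y i) ^ 2 : ℝ) / (4 * w))

/-- The heat kernel of the Bessel operator `∂_z ^ 2 + (a / z) ∂_z` in complex time `w`, with respect
to the measure `z ^ a dz`. Written with the Bessel–Clifford function it is even in `z` and `ζ`, so
none of its estimates needs a sign condition. -/
def besselHeatKernel (a : ℝ) (w : ℂ) (z ζ : ℝ) : ℂ :=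
  2 * (4 * w) ^ ((-((a + 1) / 2) : ℝ) : ℂ) * cexp (-(z ^ 2 + ζ ^ 2 : ℝ) / (4 * w)) *
    besselClifford ((a + 1) / 2) ((z * ζ) ^ 2 / (16 * w ^ 2))

/-- The heat kernel of the half-space in complex time; the Schrödinger kernel `SK` at time `t` is
its boundary value at `w = i t`. -/
def heatKernel (d : ℕ) (a : ℝ) (w : ℂ) (X Y : (Fin d → ℝ) × ℝ) : ℂ :=
  gaussKernel d w X.1 Y.1 * besselHeatKernel a w X.2 Y.2

lemma heatKernel_comm (d : ℕ) (a : ℝ) (w : ℂ) (X Y : (Fin d → ℝ) × ℝ) :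
    heatKernel d a w X Y = heatKernel d a w Y X := by
  simp only [heatKernel, gaussKernel, besselHeatKernel, sub_sq_comm (X.1 _), add_comm (X.2 ^ 2),
    mul_comm (X.2 : ℂ)]

lemma measurable_heatKernel (d : ℕ) (a : ℝ) :
    Measurable fun p : ℂ × ((Fin d → ℝ) × ℝ) × ((Fin d → ℝ) × ℝ) =>
      heatKernel d a p.1 p.2.1 p.2.2 := by
  have := (continuous_besselClifford ((a + 1) / 2)).measurable
  unfold heatKernel gaussKernel besselHeatKernel
  fun_prop

lemma continuousAt_heatKernel (d : ℕ) (a : ℝ) {w : ℂ} (hw : w ∈ slitPlane)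
    (X Y : (Fin d → ℝ) × ℝ) : ContinuousAt (fun w => heatKernel d a w X Y) w := by
  have hw0 := slitPlane_ne_zero hw
  have hpow (c : ℝ) (hc : 0 < c) (u : ℂ) : ContinuousAt (fun w : ℂ => (c * w) ^ u) w := by
    refine ContinuousAt.cpow (by fun_prop) continuousAt_const ?_
    rw [mem_slitPlane_iff_arg] at hw ⊢
    rw [arg_real_mul w hc]
    exact ⟨hw.1, mul_ne_zero (ofReal_ne_zero.2 hc.ne') hw.2⟩
  have h4 := hpow 4 four_pos
  have h4π := hpow (4 * π) (by positivity)
  push_cast at h4 h4π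
  have hC := (continuous_besselClifford ((a + 1) / 2)).continuousAt
    (x := (X.2 * Y.2) ^ 2 / (16 * w ^ 2))
  refine ((h4π _).mul (ContinuousAt.cexp ?_)).mul (((continuousAt_const.mul (h4 _)).mul
    (ContinuousAt.cexp ?_)).mul (ContinuousAt.comp (g := besselClifford _) hC ?_)) <;>
  exact continuousAt_const.div (by fun_prop) (by simp [hw0])

section BoundaryValue

lemma neg_div_four_mul_I_mul (x : ℂ) (t : ℝ) : -x / (4 * (I * t)) = I * x / (4 * t : ℝ) := by
  have hI : -(4 * (I * t)) = (4 * t : ℝ) / I := by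
    rw [div_I]
    push_cast
    ring
  rw [neg_div, ← div_neg, hI, div_div_eq_mul_div, mul_comm]

lemma gaussKernel_I_mul (d : ℕ) (x y : Fin d → ℝ) (t : ℝ) :
    gaussKernel d (I * t) x y = Sfree d x y t := by
  rw [gaussKernel, Sfree]
  congr 2
  · ring
  · push_cast
    ring
  · exact neg_div_four_mul_I_mul _ t

lemma rpow_mul_besselJ (ν : ℝ) {x : ℝ} (hx : 0 < x) :
    ((x ^ (-ν) : ℝ) : ℂ) * (besselJ ν x : ℝ) =
      ((2 ^ (-ν) : ℝ) : ℂ) * besselClifford (ν + 1) (-x ^ 2 / 4) := by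
  rw [besselJ, besselClifford_eq_tsum, ofReal_tsum, ← tsum_mul_left, ← tsum_mul_left]
  refine tsum_congr fun k => ?_
  have hpow : (x / 2) ^ (2 * (k : ℝ) + ν) = ((x / 2) ^ 2) ^ k * ((x ^ (-ν))⁻¹ * 2 ^ (-ν)) := by
    rw [Real.rpow_add (by positivity), ← Nat.cast_ofNat, ← Nat.cast_mul, Real.rpow_natCast,
      pow_mul, Real.div_rpow hx.le (by positivity), Real.rpow_neg hx.le, Real.rpow_neg (by simp),
      inv_inv, div_eq_mul_inv (x ^ ν)]
  have hx0 : x ^ (-ν) ≠ 0 := by positivity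
  have hsq : (-(x : ℂ) ^ 2 / 4) ^ k = (((-1) ^ k * ((x / 2) ^ 2) ^ k : ℝ) : ℂ) := by
    push_cast
    rw [← mul_pow]
    ring
  rw [hsq, hpow, besselCliffordCoeff, add_assoc]
  norm_cast
  field_simp

lemma ofReal_mul_I_mul_cpow {c t : ℝ} (hc : 0 < c) (ht : t ≠ 0) (u : ℝ) :
    (c * (I * t)) ^ (u : ℂ) = ((c * |t|) ^ u : ℝ) * cexp (I * Real.sign t * (u * π / 2 : ℝ)) := by
  have hct : 0 < c * |t| := by positivity
  have hlog : log (I * Real.sign t) = I * Real.sign t * (π / 2) := by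
    rcases lt_or_gt_of_ne ht with h | h
    · simp only [Real.sign_of_neg h, ofReal_neg, ofReal_one, mul_neg, mul_one, log_neg_I]
      ring
    · simp only [Real.sign_of_pos h, ofReal_one, mul_one, log_I]
      ring
  have hsign : I * Real.sign t ≠ 0 := by simpa using ht
  have hpolar : (c * (I * t) : ℂ) = (c * |t| : ℝ) * (I * Real.sign t) := by
    rcases lt_or_gt_of_ne ht with h | h
    · rw [Real.sign_of_neg h, abs_of_neg h]
      push_cast
      ring
    · rw [Real.sign_of_pos h, abs_of_pos h]
      push_cast
      ring
  rw [hpolar, cpow_def_of_ne_zero (mul_ne_zero (ofReal_ne_zero.2 hct.ne') hsign),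
    log_ofReal_mul hct hsign, hlog, Real.rpow_def_of_pos hct, ofReal_exp, ← Complex.exp_add]
  push_cast
  ring_nf

lemma besselHeatKernel_I_mul (a : ℝ) {z ζ t : ℝ} (hz : 0 < z) (hζ : 0 < ζ) (ht : t ≠ 0) :
    besselHeatKernel a (I * t) z ζ = SaK a z ζ t := by
  have htC : (t : ℂ) ≠ 0 := ofReal_ne_zero.2 ht
  have harg : -((z * ζ / (2 * |t|) : ℝ) : ℂ) ^ 2 / 4 = (z * ζ) ^ 2 / (16 * (I * t) ^ 2) := by
    have habs : ((|t| : ℝ) : ℂ) ^ 2 = t ^ 2 := by rw [← ofReal_pow, sq_abs, ofReal_pow]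
    push_cast
    rw [mul_pow I, I_sq, div_pow, mul_pow 2, habs]
    field_simp
    ring
  have hexp := neg_div_four_mul_I_mul (z ^ 2 + ζ ^ 2 : ℝ) t
  have hbessel := rpow_mul_besselJ ((a - 1) / 2) (show 0 < z * ζ / (2 * |t|) by positivity)
  rw [show -((a - 1) / 2) = (1 - a) / 2 by ring, show (a - 1) / 2 + 1 = (a + 1) / 2 by ring,
    harg] at hbessel
  have hpow := ofReal_mul_I_mul_cpow four_pos ht (-((a + 1) / 2))
  have hphase : I * Real.sign t * ((-((a + 1) / 2) * π / 2 : ℝ) : ℂ) =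
      -I * Real.sign t * ((a + 1) * π / 4 : ℝ) := by
    push_cast
    ring
  have hscale : 2 * (4 * |t|) ^ (-((a + 1) / 2)) =
      ((2 * |t|) ^ ((a + 1) / 2))⁻¹ * 2 ^ ((1 - a) / 2) := by
    rw [show (4 : ℝ) * |t| = 2 * |t| * 2 by ring, Real.mul_rpow (by positivity) two_pos.le,
      Real.rpow_neg (by positivity), show (1 - a) / 2 = -((a + 1) / 2) + 1 by ring,
      Real.rpow_add_one two_ne_zero]
    ring
  rw [ofReal_ofNat, hphase] at hpow
  rw [SaK, mul_assoc (_ / _), hbessel, besselHeatKernel, hpow, hexp, ← mul_assoc 2,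
    ← ofReal_ofNat 2, ← ofReal_mul, hscale]
  push_cast
  ring

theorem heatKernel_I_mul (d : ℕ) (a : ℝ) {X Y : (Fin d → ℝ) × ℝ} (hX : 0 < X.2) (hY : 0 < Y.2)
    {t : ℝ} (ht : t ≠ 0) : heatKernel d a (I * t) X Y = SK d a X Y t := by
  rw [heatKernel, gaussKernel_I_mul, besselHeatKernel_I_mul a hX hY ht, SK, mul_comm]

end BoundaryValue

section Bounds

variable {a : ℝ} {w : ℂ}

lemma norm_gaussKernel_le (d : ℕ) (hw : 0 ≤ w.re) (x y : Fin d → ℝ) :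
    ‖gaussKernel d w x y‖ ≤ (4 * π) ^ (-(d / 2 : ℝ)) * ‖w‖ ^ (-(d / 2 : ℝ)) := by
  have hexp : ‖cexp (-(∑ i, (x i - y i) ^ 2 : ℝ) / (4 * w))‖ ≤ 1 := by
    rw [norm_exp, Real.exp_le_one_iff, div_eq_mul_inv, mul_inv, ← ofReal_neg, re_ofReal_mul,
      ← ofReal_ofNat 4, ← ofReal_inv, re_ofReal_mul, inv_re]
    have : 0 ≤ ∑ i, (x i - y i) ^ 2 := by positivity
    have : 0 ≤ w.re / normSq w := div_nonneg hw (normSq_nonneg w)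
    exact mul_nonpos_of_nonpos_of_nonneg (by linarith) (by positivity)
  have hnorm : ‖(4 * π : ℂ)‖ = 4 * π := by simp [abs_of_pos Real.pi_pos]
  rw [gaussKernel, norm_mul, norm_cpow_real, norm_mul,
    Real.mul_rpow (norm_nonneg _) (norm_nonneg _), hnorm]
  exact mul_le_of_le_one_right (by positivity) hexp

lemma norm_besselHeatKernel_le (ha : 0 ≤ a) (hw : 0 ≤ w.re) (z ζ : ℝ) :
    ‖besselHeatKernel a w z ζ‖ ≤ 2 * 4 ^ (-((a + 1) / 2)) * (Real.Gamma ((a + 1) / 2))⁻¹ *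
      ‖w‖ ^ (-((a + 1) / 2)) := by
  have hC := norm_besselClifford_sq_div_four_le (s := (a + 1) / 2) (by linarith) (z * ζ / (2 * w))
  have hw' : 0 ≤ w⁻¹.re := by
    rw [inv_re]
    exact div_nonneg hw (normSq_nonneg w)
  have hre : (z * ζ / (2 * w) : ℂ).re = z * ζ * (w⁻¹.re / 2) := by
    rw [show (z * ζ / (2 * w) : ℂ) = (z * ζ / 2 : ℝ) * w⁻¹ by push_cast; field_simp, re_ofReal_mul]
    ring
  have hre' : (-(z ^ 2 + ζ ^ 2 : ℝ) / (4 * w) : ℂ).re = -(z ^ 2 + ζ ^ 2) * (w⁻¹.re / 4) := by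
    rw [show (-(z ^ 2 + ζ ^ 2 : ℝ) / (4 * w) : ℂ) = (-(z ^ 2 + ζ ^ 2) / 4 : ℝ) * w⁻¹ by
      push_cast; field_simp, re_ofReal_mul]
    ring
  have hexp : Real.exp (-(z ^ 2 + ζ ^ 2) * (w⁻¹.re / 4)) * Real.exp |z * ζ * (w⁻¹.re / 2)| ≤ 1 := by
    rw [← Real.exp_add, Real.exp_le_one_iff, abs_mul,
      abs_of_nonneg (show 0 ≤ w⁻¹.re / 2 by linarith)]
    have := two_mul_le_add_sq |z| |ζ|
    rw [sq_abs, sq_abs, mul_assoc, ← abs_mul] at this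
    nlinarith
  rw [hre, show (z * ζ / (2 * w) : ℂ) ^ 2 / 4 = (z * ζ) ^ 2 / (16 * w ^ 2) by ring] at hC
  have h4 : ‖(2 : ℂ) * (4 * w) ^ ((-((a + 1) / 2) : ℝ) : ℂ)‖ =
      2 * 4 ^ (-((a + 1) / 2)) * ‖w‖ ^ (-((a + 1) / 2)) := by
    rw [norm_mul, norm_cpow_real, norm_mul, Real.mul_rpow (norm_nonneg _) (norm_nonneg _),
      norm_ofNat, norm_ofNat, mul_assoc]
  rw [besselHeatKernel, norm_mul, norm_mul, h4, norm_exp, hre']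
  have : 0 < (Real.Gamma ((a + 1) / 2))⁻¹ := inv_pos.2 (Real.Gamma_pos_of_pos (by linarith))
  set A := 2 * 4 ^ (-((a + 1) / 2)) * ‖w‖ ^ (-((a + 1) / 2))
  calc _ ≤ A * Real.exp (-(z ^ 2 + ζ ^ 2) * (w⁻¹.re / 4)) *
        ((Real.Gamma ((a + 1) / 2))⁻¹ * Real.exp |z * ζ * (w⁻¹.re / 2)|) := by gcongr
    _ = A * (Real.Gamma ((a + 1) / 2))⁻¹ *
        (Real.exp (-(z ^ 2 + ζ ^ 2) * (w⁻¹.re / 4)) * Real.exp |z * ζ * (w⁻¹.re / 2)|) := by ring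
    _ ≤ A * (Real.Gamma ((a + 1) / 2))⁻¹ := mul_le_of_le_one_right (by positivity) hexp
    _ = _ := by ring

/-- The constant in the dispersive bound `norm_heatKernel_le`. -/
def heatKernelBound (d : ℕ) (a : ℝ) : ℝ :=
  (4 * π) ^ (-(d / 2 : ℝ)) * (2 * 4 ^ (-((a + 1) / 2)) * (Real.Gamma ((a + 1) / 2))⁻¹)

lemma heatKernelBound_pos (d : ℕ) (ha : -1 < a) : 0 < heatKernelBound d a := by
  have := Real.Gamma_pos_of_pos (show 0 < (a + 1) / 2 by linarith)
  unfold heatKernelBound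
  positivity

theorem norm_heatKernel_le (d : ℕ) (ha : 0 ≤ a) (hw : 0 ≤ w.re) (hw0 : w ≠ 0)
    (X Y : (Fin d → ℝ) × ℝ) :
    ‖heatKernel d a w X Y‖ ≤ heatKernelBound d a * ‖w‖ ^ (-((d + a + 1) / 2)) := by
  rw [heatKernel, norm_mul]
  calc _ ≤ _ * _ := mul_le_mul (norm_gaussKernel_le d hw _ _) (norm_besselHeatKernel_le ha hw _ _)
        (norm_nonneg _) (by positivity)
    _ = _ := by
      rw [mul_mul_mul_comm, ← Real.rpow_add (norm_pos_iff.2 hw0), heatKernelBound]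
      ring_nf

end Bounds

section PrincipalBranch

lemma mul_cpow_of_re_pos {x y : ℂ} (hx : 0 < x.re) (hy : 0 < y.re) (c : ℂ) :
    (x * y) ^ c = x ^ c * y ^ c := by
  have hx0 : x ≠ 0 := ne_zero_of_re_pos hx
  have hy0 : y ≠ 0 := ne_zero_of_re_pos hy
  have hxarg := abs_lt.1 (abs_arg_lt_pi_div_two_iff.2 (.inl hx))
  have hyarg := abs_lt.1 (abs_arg_lt_pi_div_two_iff.2 (.inl hy))
  have hlog : log (x * y) = log x + log y :=
    (log_mul_eq_add_log_iff hx0 hy0).2 ⟨by linarith, by linarith⟩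
  rw [cpow_def_of_ne_zero (mul_ne_zero hx0 hy0), cpow_def_of_ne_zero hx0, cpow_def_of_ne_zero hy0,
    hlog, add_mul, Complex.exp_add]

lemma inv_re_pos {x : ℂ} (hx : 0 < x.re) : 0 < x⁻¹.re := by
  rw [inv_re]
  exact div_pos hx (normSq_pos.2 (ne_zero_of_re_pos hx))

lemma inv_cpow_of_re_pos {x : ℂ} (hx : 0 < x.re) (c : ℂ) : x⁻¹ ^ c = (x ^ c)⁻¹ :=
  inv_cpow _ _ (arg_lt_pi_iff.2 (.inl hx.le)).ne

variable {w w' : ℂ}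

lemma add_div_mul_re_pos {k : ℝ} (hk : 0 < k) (hw : 0 < w.re) (hw' : 0 < w'.re) :
    0 < ((w + w') / (k * w * w')).re := by
  have hw0 := ne_zero_of_re_pos hw
  have hw0' := ne_zero_of_re_pos hw'
  have hk0 := ofReal_ne_zero.2 hk.ne'
  have hadd : (w + w') / (k * w * w') = (k * w)⁻¹ + (k * w')⁻¹ := by field_simp; ring
  rw [hadd]
  exact add_pos (inv_re_pos (by simpa using mul_pos hk hw))
    (inv_re_pos (by simpa using mul_pos hk hw'))

-- `w * w'` may leave the domain of the principal branch, but it is the quotient of `w + w'` by the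
-- third base, which stays in the right half-plane.
lemma mul_cpow_mul_mul_cpow_mul_add_div_cpow {k : ℝ} (hk : 0 < k) (hw : 0 < w.re)
    (hw' : 0 < w'.re) (c : ℂ) :
    (k * w) ^ c * (k * w') ^ c * ((w + w') / (k * w * w')) ^ c = (k * (w + w')) ^ c := by
  have hw0 := ne_zero_of_re_pos hw
  have hw0' := ne_zero_of_re_pos hw'
  have hk0 := ofReal_ne_zero.2 hk.ne'
  have hp := add_div_mul_re_pos hk hw hw'
  have hp0 := ne_zero_of_re_pos hp
  have hmul_re {u : ℂ} (hu : 0 < u.re) : 0 < (k * u).re := by simpa using mul_pos hk hu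
  have hsum : k * w * (k * w') = k * (w + w') * ((w + w') / (k * w * w'))⁻¹ := by
    have := ne_zero_of_re_pos (show 0 < (w + w').re from add_pos hw hw')
    field_simp
  rw [← mul_cpow_of_re_pos (hmul_re hw) (hmul_re hw'), hsum,
    mul_cpow_of_re_pos (hmul_re (add_pos hw hw')) (inv_re_pos hp), inv_cpow_of_re_pos hp,
    inv_mul_cancel_right₀]
  simp [cpow_eq_zero_iff, hp0]

end PrincipalBranch

/-! ### The semigroup law -/

section Bessel

lemma besselHeatKernel_eq_mul (a : ℝ) (w : ℂ) (z ζ : ℝ) :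
    besselHeatKernel a w z ζ = 2 * (4 * w) ^ ((-((a + 1) / 2) : ℝ) : ℂ) * cexp (-ζ ^ 2 / (4 * w)) *
      (cexp (-(4 * w)⁻¹ * z ^ 2) *
        besselClifford ((a + 1) / 2) ((ζ : ℂ) ^ 2 / (16 * w ^ 2) * z ^ 2)) := by
  have hexp : cexp (-(z ^ 2 + ζ ^ 2 : ℝ) / (4 * w)) =
      cexp (-ζ ^ 2 / (4 * w)) * cexp (-(4 * w)⁻¹ * z ^ 2) := by
    rw [← Complex.exp_add]
    congr 1
    push_cast
    ring
  rw [besselHeatKernel, hexp, show (ζ : ℂ) ^ 2 / (16 * w ^ 2) * z ^ 2 =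
    (z * ζ) ^ 2 / (16 * w ^ 2) by ring]
  ring

lemma besselHeatKernel_mul_besselHeatKernel (a : ℝ) (w w' : ℂ) (z ζ ζ' : ℝ) :
    besselHeatKernel a w z ζ * besselHeatKernel a w' z ζ' =
      2 * (4 * w) ^ ((-((a + 1) / 2) : ℝ) : ℂ) * cexp (-ζ ^ 2 / (4 * w)) *
        (2 * (4 * w') ^ ((-((a + 1) / 2) : ℝ) : ℂ) * cexp (-ζ' ^ 2 / (4 * w'))) *
        (cexp (-((4 * w)⁻¹ + (4 * w')⁻¹) * z ^ 2) *
          (besselClifford ((a + 1) / 2) ((ζ : ℂ) ^ 2 / (16 * w ^ 2) * z ^ 2) *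
            besselClifford ((a + 1) / 2) ((ζ' : ℂ) ^ 2 / (16 * w' ^ 2) * z ^ 2))) := by
  rw [neg_add, add_mul, Complex.exp_add, besselHeatKernel_eq_mul, besselHeatKernel_eq_mul]
  ring

variable {a : ℝ} {w w' : ℂ}

theorem integral_mul_besselHeatKernel_mul_besselHeatKernel (ha : -1 < a) (hw : 0 < w.re)
    (hw' : 0 < w'.re) (ζ ζ' : ℝ) :
    ∫ z in Ioi 0, ((z ^ a : ℝ) : ℂ) * (besselHeatKernel a w z ζ * besselHeatKernel a w' z ζ') =
      besselHeatKernel a (w + w') ζ ζ' := by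
  have hw0 := ne_zero_of_re_pos hw
  have hw0' := ne_zero_of_re_pos hw'
  have hww' : 0 < (w + w').re := add_pos hw hw'
  have hww0 := ne_zero_of_re_pos hww'
  have hp_eq : (4 * w)⁻¹ + (4 * w')⁻¹ = (w + w') / (4 * w * w') := by field_simp; ring
  have hp_re := add_div_mul_re_pos four_pos hw hw'
  have hpow := mul_cpow_mul_mul_cpow_mul_add_div_cpow four_pos hw hw' ((-((a + 1) / 2) : ℝ) : ℂ)
  rw [ofReal_ofNat] at hp_re hpow
  obtain ⟨p, hp⟩ : ∃ p, p = (w + w') / (4 * w * w') := ⟨_, rfl⟩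
  rw [← hp] at hp_eq hp_re hpow
  have hexp : cexp (-(ζ ^ 2 + ζ' ^ 2 : ℝ) / (4 * (w + w'))) =
      cexp (-ζ ^ 2 / (4 * w)) * cexp (-ζ' ^ 2 / (4 * w')) *
        (cexp (ζ ^ 2 / (16 * w ^ 2) / p) * cexp (ζ' ^ 2 / (16 * w' ^ 2) / p)) := by
    simp only [← Complex.exp_add, hp]
    congr 1
    push_cast
    field_simp
    ring
  have harg : ((ζ : ℂ) * ζ') ^ 2 / (16 * (w + w') ^ 2) =
      ζ ^ 2 / (16 * w ^ 2) / p * (ζ' ^ 2 / (16 * w' ^ 2) / p) := by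
    rw [hp]
    field_simp
    ring
  have hweber := integral_mul_besselClifford_mul_besselClifford (s := (a + 1) / 2) (by linarith)
    hp_re ((ζ : ℂ) ^ 2 / (16 * w ^ 2)) ((ζ' : ℂ) ^ 2 / (16 * w' ^ 2))
  rw [mul_div_cancel₀ _ two_ne_zero, add_sub_cancel_right] at hweber
  have hprod (z : ℝ) := congrArg (((z ^ a : ℝ) : ℂ) * ·)
    (besselHeatKernel_mul_besselHeatKernel a w w' z ζ ζ')
  simp only [hp_eq, mul_left_comm (((_ : ℝ) ^ a : ℝ) : ℂ) (_ * _ * _)] at hprod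
  simp only [mul_assoc] at hweber
  simp only [hprod, integral_const_mul]
  rw [hweber, besselHeatKernel, hexp, harg, ← hpow, ← ofReal_neg]
  ring

theorem integral_mul_besselHeatKernel (ha : -1 < a) (hw : 0 < w.re) (ζ : ℝ) :
    ∫ z in Ioi 0, ((z ^ a : ℝ) : ℂ) * besselHeatKernel a w z ζ = 1 := by
  have hs : 0 < (a + 1) / 2 := by linarith
  have h4w : 0 < (4 * w).re := by simpa using hw
  have hw0 := ne_zero_of_re_pos hw
  have hweber := integral_mul_besselClifford_mul_besselClifford hs (inv_re_pos h4w)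
    ((ζ : ℂ) ^ 2 / (16 * w ^ 2)) 0
  rw [mul_div_cancel₀ _ two_ne_zero, add_sub_cancel_right, inv_cpow_of_re_pos h4w, ← cpow_neg,
    neg_neg] at hweber
  simp only [zero_mul, zero_div, mul_zero, Complex.exp_zero, mul_one, besselClifford_zero,
    ← mul_assoc, integral_mul_const] at hweber
  have hweber' := mul_right_cancel₀
    (ofReal_ne_zero.2 (inv_ne_zero (Real.Gamma_pos_of_pos hs).ne')) hweber
  have hpow : (4 * w) ^ ((-((a + 1) / 2) : ℝ) : ℂ) * (4 * w) ^ (((a + 1) / 2 : ℝ) : ℂ) = 1 := by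
    rw [ofReal_neg, cpow_neg, inv_mul_cancel₀]
    simp [cpow_eq_zero_iff, hw0]
  have hexp : cexp (-ζ ^ 2 / (4 * w)) * cexp (ζ ^ 2 / (16 * w ^ 2) / (4 * w)⁻¹) = 1 := by
    rw [← Complex.exp_add, Complex.exp_eq_one_iff]
    exact ⟨0, by field_simp; ring⟩
  have hmul (z : ℝ) := congrArg (((z ^ a : ℝ) : ℂ) * ·) (besselHeatKernel_eq_mul a w z ζ)
  simp only [mul_left_comm (((_ : ℝ) ^ a : ℝ) : ℂ) (_ * _ * _)] at hmul
  simp only [mul_assoc _ (cexp _)] at hweber'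
  simp only [hmul, integral_const_mul]
  rw [hweber']
  linear_combination (cexp (-ζ ^ 2 / (4 * w)) * cexp (ζ ^ 2 / (16 * w ^ 2) / (4 * w)⁻¹)) * hpow +
    hexp

end Bessel

section Gauss

variable {d : ℕ} {w w' : ℂ}

lemma gaussKernel_eq_mul (w : ℂ) (x y : Fin d → ℝ) :
    gaussKernel d w x y = (4 * π * w) ^ ((-(d / 2) : ℝ) : ℂ) * cexp (-(∑ i, y i ^ 2) / (4 * w)) *
      cexp (-(4 * w)⁻¹ * ∑ i, (x i : ℂ) ^ 2 + ∑ i, y i / (2 * w) * x i) := by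
  rw [gaussKernel, mul_assoc (_ ^ _), ← Complex.exp_add]
  congr 2
  push_cast
  rw [← Finset.sum_neg_distrib, ← Finset.sum_neg_distrib, Finset.sum_div, Finset.sum_div,
    Finset.mul_sum, ← Finset.sum_add_distrib, ← Finset.sum_add_distrib]
  exact Finset.sum_congr rfl fun i _ => by ring

lemma gaussKernel_mul_gaussKernel (w w' : ℂ) (x y y' : Fin d → ℝ) :
    gaussKernel d w x y * gaussKernel d w' x y' =
      (4 * π * w) ^ ((-(d / 2) : ℝ) : ℂ) * cexp (-(∑ i, y i ^ 2) / (4 * w)) *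
        ((4 * π * w') ^ ((-(d / 2) : ℝ) : ℂ) * cexp (-(∑ i, y' i ^ 2) / (4 * w'))) *
        cexp (-((4 * w)⁻¹ + (4 * w')⁻¹) * ∑ i, (x i : ℂ) ^ 2 +
          ∑ i, (y i / (2 * w) + y' i / (2 * w')) * x i) := by
  simp only [gaussKernel_eq_mul, add_mul, neg_add, Finset.sum_add_distrib, Complex.exp_add]
  ring

lemma cpow_mul_cpow_mul_pi_div_cpow (hw : 0 < w.re) (hw' : 0 < w'.re) (s : ℝ) :
    (4 * π * w) ^ ((-s : ℝ) : ℂ) * (4 * π * w') ^ ((-s : ℝ) : ℂ) *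
      (π / ((w + w') / (4 * w * w'))) ^ (s : ℂ) = (4 * π * (w + w')) ^ ((-s : ℝ) : ℂ) := by
  have hk : 0 < 4 * π := mul_pos four_pos Real.pi_pos
  have hbase := add_div_mul_re_pos hk hw hw'
  have hpow := mul_cpow_mul_mul_cpow_mul_add_div_cpow hk hw hw' ((-s : ℝ) : ℂ)
  have hdiv : (w + w') / ((4 * π : ℝ) * w * w') = (π / ((w + w') / (4 * w * w')))⁻¹ := by
    have : (π : ℂ) ≠ 0 := ofReal_ne_zero.2 Real.pi_ne_zero
    push_cast
    field_simp
  rw [hdiv] at hbase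
  rw [hdiv, ofReal_mul, ofReal_ofNat] at hpow
  rw [← hpow, ofReal_neg s, cpow_neg _⁻¹, ← inv_cpow_of_re_pos hbase, inv_inv]

theorem integral_gaussKernel_mul_gaussKernel (hw : 0 < w.re) (hw' : 0 < w'.re)
    (y y' : Fin d → ℝ) :
    ∫ x, gaussKernel d w x y * gaussKernel d w' x y' = gaussKernel d (w + w') y y' := by
  have hw0 := ne_zero_of_re_pos hw
  have hw0' := ne_zero_of_re_pos hw'
  have hww0 := ne_zero_of_re_pos (show 0 < (w + w').re from add_pos hw hw')
  have hp_eq : (4 * w)⁻¹ + (4 * w')⁻¹ = (w + w') / (4 * w * w') := by field_simp; ring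
  have hp_re := add_div_mul_re_pos four_pos hw hw'
  rw [ofReal_ofNat] at hp_re
  have hexp : cexp (-(∑ i, (y i - y' i) ^ 2 : ℝ) / (4 * (w + w'))) =
      cexp (-(∑ i, y i ^ 2) / (4 * w)) * cexp (-(∑ i, y' i ^ 2) / (4 * w')) *
        cexp ((∑ i, (y i / (2 * w) + y' i / (2 * w')) ^ 2) /
          (4 * ((w + w') / (4 * w * w')))) := by
    simp only [← Complex.exp_add]
    congr 1
    push_cast
    simp only [← Finset.sum_neg_distrib, Finset.sum_div, ← Finset.sum_add_distrib]
    refine Finset.sum_congr rfl fun i _ => ?_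
    field_simp
    ring
  have hpow := cpow_mul_cpow_mul_pi_div_cpow hw hw' (d / 2)
  rw [ofReal_div, ofReal_natCast, ofReal_ofNat] at hpow
  simp only [gaussKernel_mul_gaussKernel, hp_eq, integral_const_mul]
  rw [GaussianFourier.integral_cexp_neg_mul_sum_add hp_re, Fintype.card_fin, gaussKernel, ← hpow,
    hexp]
  ring

theorem integral_gaussKernel (hw : 0 < w.re) (y : Fin d → ℝ) : ∫ x, gaussKernel d w x y = 1 := by
  have hw0 := ne_zero_of_re_pos hw
  have : (π : ℂ) ≠ 0 := ofReal_ne_zero.2 Real.pi_ne_zero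
  have hpow : (4 * π * w) ^ ((-(d / 2) : ℝ) : ℂ) * (π / (4 * w)⁻¹) ^ (d / 2 : ℂ) = 1 := by
    rw [div_inv_eq_mul, show π * (4 * w) = 4 * π * w by ring, ofReal_neg, cpow_neg]
    push_cast
    exact inv_mul_cancel₀ (by simp [cpow_eq_zero_iff, hw0])
  have hexp : cexp (-(∑ i, y i ^ 2) / (4 * w)) *
      cexp ((∑ i, (y i / (2 * w)) ^ 2) / (4 * (4 * w)⁻¹)) = 1 := by
    rw [← Complex.exp_add, Complex.exp_eq_one_iff]
    refine ⟨0, ?_⟩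
    push_cast
    simp only [div_pow, ← Finset.sum_div]
    field_simp
    ring
  simp only [gaussKernel_eq_mul, integral_const_mul]
  rw [GaussianFourier.integral_cexp_neg_mul_sum_add (inv_re_pos (by simpa using hw)),
    Fintype.card_fin]
  linear_combination (cexp (-(∑ i, y i ^ 2) / (4 * w)) *
    cexp ((∑ i, (y i / (2 * w)) ^ 2) / (4 * (4 * w)⁻¹))) * hpow + hexp

end Gauss

section HalfSpace

lemma lintegral_enorm_sq_eq_enorm_integral {α : Type*} [MeasurableSpace α] {ν : Measure α}
    {f : α → ℂ} (hf : Integrable (fun x => f x * conj (f x)) ν) :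
    ∫⁻ x, ‖f x‖ₑ ^ 2 ∂ν = ‖∫ x, f x * conj (f x) ∂ν‖ₑ := by
  have hsq (x : α) : f x * conj (f x) = (‖f x‖ ^ 2 : ℝ) := by rw [mul_conj']; norm_cast
  simp only [hsq] at hf ⊢
  have hf' : Integrable (fun x => ‖f x‖ ^ 2) ν := hf.re
  rw [integral_complex_ofReal, ← ofReal_norm, norm_real,
    Real.norm_of_nonneg (integral_nonneg fun _ => by positivity),
    ofReal_integral_eq_lintegral_ofReal hf' (.of_forall fun _ => by positivity)]
  simp only [ENNReal.ofReal_pow (norm_nonneg _), ofReal_norm]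

instance instSigmaFiniteωa (d : ℕ) (a : ℝ) : SigmaFinite (ωa d a) := by
  unfold ωa
  have := SigmaFinite.withDensity_ofReal (μ := volume.restrict (Ioi (0 : ℝ))) fun z => z ^ a
  infer_instance

lemma ae_ωa_snd_pos (d : ℕ) (a : ℝ) : ∀ᵐ X ∂ωa d a, 0 < X.2 := by
  have hpos : ∀ᵐ z ∂(volume.restrict (Ioi (0 : ℝ))).withDensity fun z => ENNReal.ofReal (z ^ a),
      0 < z :=
    (withDensity_absolutelyContinuous _ _).ae_le (ae_restrict_mem measurableSet_Ioi)
  exact Measure.quasiMeasurePreserving_snd.ae hpos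

lemma integral_ωa_mul (d : ℕ) (a : ℝ) (f : (Fin d → ℝ) → ℂ) (g : ℝ → ℂ) :
    ∫ X, f X.1 * g X.2 ∂ωa d a = (∫ x, f x) * ∫ z in Ioi 0, ((z ^ a : ℝ) : ℂ) * g z := by
  rw [ωa, integral_prod_mul, integral_withDensity_eq_integral_toReal_smul₀ (by fun_prop) (by simp)]
  congr 1
  refine setIntegral_congr_fun measurableSet_Ioi fun z (hz : 0 < z) => ?_
  simp only [ENNReal.toReal_ofReal (Real.rpow_nonneg hz.le a), real_smul]

variable {d : ℕ} {a : ℝ} {w w' : ℂ}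

theorem integral_heatKernel_mul_heatKernel (ha : -1 < a) (hw : 0 < w.re) (hw' : 0 < w'.re)
    (Y Y' : (Fin d → ℝ) × ℝ) :
    ∫ X, heatKernel d a w X Y * heatKernel d a w' X Y' ∂ωa d a =
      heatKernel d a (w + w') Y Y' := by
  have hsplit (X) : heatKernel d a w X Y * heatKernel d a w' X Y' =
      gaussKernel d w X.1 Y.1 * gaussKernel d w' X.1 Y'.1 *
        (besselHeatKernel a w X.2 Y.2 * besselHeatKernel a w' X.2 Y'.2) :=
    mul_mul_mul_comm ..
  simp only [hsplit]
  rw [integral_ωa_mul d a (fun x => gaussKernel d w x Y.1 * gaussKernel d w' x Y'.1)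
      fun z => besselHeatKernel a w z Y.2 * besselHeatKernel a w' z Y'.2,
    integral_gaussKernel_mul_gaussKernel hw hw',
    integral_mul_besselHeatKernel_mul_besselHeatKernel ha hw hw', heatKernel]

lemma integral_heatKernel (ha : -1 < a) (hw : 0 < w.re) (Y : (Fin d → ℝ) × ℝ) :
    ∫ X, heatKernel d a w X Y ∂ωa d a = 1 := by
  simp only [heatKernel]
  rw [integral_ωa_mul d a (gaussKernel d w · Y.1) (besselHeatKernel a w · Y.2),
    integral_gaussKernel hw, integral_mul_besselHeatKernel ha hw, mul_one]

lemma conj_heatKernel (hw : 0 < w.re) (X Y : (Fin d → ℝ) × ℝ) :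
    conj (heatKernel d a w X Y) = heatKernel d a (conj w) X Y := by
  have hpow {k : ℝ} (hk : 0 < k) (c : ℝ) :
      conj ((k * w) ^ (c : ℂ)) = (k * conj w) ^ (c : ℂ) := by
    have harg : (k * w).arg ≠ π :=
      (arg_lt_pi_iff.2 (.inl (by simpa using (mul_pos hk hw).le))).ne
    simpa using (conj_cpow _ (c : ℂ) harg).symm
  have h4 := hpow four_pos
  have h4π := hpow (mul_pos four_pos Real.pi_pos)
  push_cast at h4 h4π
  simp only [heatKernel, gaussKernel, besselHeatKernel, map_mul, h4, h4π, ← Complex.exp_conj,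
    conj_besselClifford, map_div₀, map_pow, map_neg, conj_ofReal, map_ofNat]

lemma heatKernel_pos (ha : -1 < a) {ε : ℝ} (hε : 0 < ε) (X Y : (Fin d → ℝ) × ℝ) :
    0 < heatKernel d a ε X Y := by
  have hC : 0 < besselClifford ((a + 1) / 2) ((X.2 * Y.2) ^ 2 / (16 * ε ^ 2)) := by
    refine besselClifford_pos (by linarith) ?_
    norm_cast
    positivity
  have hpow {k : ℝ} (hk : 0 < k) (c : ℝ) : 0 < ((k * ε : ℝ) : ℂ) ^ (c : ℂ) := by
    rw [← ofReal_cpow (mul_pos hk hε).le]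
    exact_mod_cast Real.rpow_pos_of_pos (mul_pos hk hε) c
  have hexp (u v : ℝ) : 0 < cexp (-(u : ℂ) / (4 * v)) := by
    exact_mod_cast Real.exp_pos (-u / (4 * v))
  have h4 := hpow four_pos
  have h4π := hpow (mul_pos four_pos Real.pi_pos)
  push_cast at h4 h4π
  exact mul_pos (mul_pos (h4π _) (hexp _ _))
    (mul_pos (mul_pos (mul_pos two_pos (h4 _)) (hexp _ _)) hC)

lemma integrable_heatKernel (ha : -1 < a) (hw : 0 < w.re) (Y : (Fin d → ℝ) × ℝ) :
    Integrable (fun X => heatKernel d a w X Y) (ωa d a) :=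
  .of_integral_ne_zero (by simp [integral_heatKernel ha hw])

lemma lintegral_enorm_heatKernel_sq (ha : -1 < a) (hw : 0 < w.re) (Y : (Fin d → ℝ) × ℝ) :
    ∫⁻ X, ‖heatKernel d a w X Y‖ₑ ^ 2 ∂ωa d a = ‖heatKernel d a (2 * w.re : ℝ) Y Y‖ₑ := by
  have hck := integral_heatKernel_mul_heatKernel ha hw (w' := conj w) (by simpa using hw) Y Y
  simp only [← conj_heatKernel hw, add_conj] at hck
  rw [lintegral_enorm_sq_eq_enorm_integral, hck]
  refine .of_integral_ne_zero ?_
  rw [hck]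
  exact (heatKernel_pos ha (mul_pos two_pos hw) Y Y).ne'

end HalfSpace

/-! ### Integral operators with square-integrable columns -/

section KernelForm

/-- The bilinear form `∬ m(y, y') G(y) H(y') dμ(y) dμ(y')` of a kernel `m`. -/
def kernelForm {β : Type*} [MeasurableSpace β] (μ : Measure β) (m : β × β → ℂ) (G H : β → ℂ) : ℂ :=
  ∫ p, m p * (G p.1 * H p.2) ∂μ.prod μ

variable {α β : Type*} [MeasurableSpace α] [MeasurableSpace β] {ν : Measure α} {μ : Measure β}
  {k k' : α → β → ℂ} {G H : β → ℂ} {M : ℝ≥0∞}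

lemma mul_le_inv_two_mul_sq_add (u v : ℝ≥0∞) : u * v ≤ 2⁻¹ * u ^ 2 + 2⁻¹ * v ^ 2 := by
  have h := ENNReal.young_inequality u v Real.HolderConjugate.two_two
  simpa [div_eq_mul_inv, mul_comm _ (2⁻¹ : ℝ≥0∞)] using h

lemma lintegral_mul_le_of_lintegral_sq_le {f g : α → ℝ≥0∞} (hf : AEMeasurable f ν)
    (hg : AEMeasurable g ν) (hfM : ∫⁻ x, f x ^ 2 ∂ν ≤ M) (hgM : ∫⁻ x, g x ^ 2 ∂ν ≤ M) :
    ∫⁻ x, f x * g x ∂ν ≤ M :=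
  calc
    _ ≤ ∫⁻ x, (2⁻¹ * f x ^ 2 + 2⁻¹ * g x ^ 2) ∂ν :=
      lintegral_mono fun _ => mul_le_inv_two_mul_sq_add _ _
    _ = 2⁻¹ * ∫⁻ x, f x ^ 2 ∂ν + 2⁻¹ * ∫⁻ x, g x ^ 2 ∂ν := by
      rw [lintegral_add_left' (by fun_prop), lintegral_const_mul'' _ (by fun_prop),
        lintegral_const_mul'' _ (by fun_prop)]
    _ ≤ 2⁻¹ * M + 2⁻¹ * M := by gcongr
    _ = M := by rw [← add_mul, ENNReal.inv_two_add_inv_two, one_mul]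

/-- Schur's test. -/
lemma lintegral_prod_mul_mul_le [SFinite μ] {m : β × β → ℝ≥0∞} {f : β → ℝ≥0∞} (hm : Measurable m)
    (hf : AEMeasurable f μ) (hm₁ : ∀ y, ∫⁻ y', m (y, y') ∂μ ≤ 1)
    (hm₂ : ∀ y', ∫⁻ y, m (y, y') ∂μ ≤ 1) :
    ∫⁻ p, m p * (f p.1 * f p.2) ∂μ.prod μ ≤ ∫⁻ y, f y ^ 2 ∂μ := by
  have : AEMeasurable (fun p : β × β => f p.1) (μ.prod μ) := hf.comp_fst
  have : AEMeasurable (fun p : β × β => f p.2) (μ.prod μ) := hf.comp_snd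
  have h₁ : ∫⁻ p, m p * f p.1 ^ 2 ∂μ.prod μ ≤ ∫⁻ y, f y ^ 2 ∂μ := by
    rw [lintegral_prod _ (by fun_prop)]
    refine lintegral_mono fun y => ?_
    exact (lintegral_mul_const (f y ^ 2) (by fun_prop)).trans_le (mul_le_of_le_one_left' (hm₁ y))
  have h₂ : ∫⁻ p, m p * f p.2 ^ 2 ∂μ.prod μ ≤ ∫⁻ y, f y ^ 2 ∂μ := by
    rw [lintegral_prod_symm _ (by fun_prop)]
    refine lintegral_mono fun y => ?_
    exact (lintegral_mul_const (f y ^ 2) (by fun_prop)).trans_le (mul_le_of_le_one_left' (hm₂ y))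
  calc
    _ ≤ ∫⁻ p, (2⁻¹ * (m p * f p.1 ^ 2) + 2⁻¹ * (m p * f p.2 ^ 2)) ∂μ.prod μ := by
      refine lintegral_mono fun p => ?_
      rw [mul_left_comm 2⁻¹, mul_left_comm 2⁻¹, ← mul_add]
      gcongr
      exact mul_le_inv_two_mul_sq_add _ _
    _ ≤ 2⁻¹ * ∫⁻ y, f y ^ 2 ∂μ + 2⁻¹ * ∫⁻ y, f y ^ 2 ∂μ := by
      rw [lintegral_add_left' (by fun_prop), lintegral_const_mul'' _ (by fun_prop),
        lintegral_const_mul'' _ (by fun_prop)]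
      gcongr
    _ = _ := by rw [← add_mul, ENNReal.inv_two_add_inv_two, one_mul]

variable [SFinite ν] [SFinite μ]

lemma integrable_kernel_mul_kernel (hk : Measurable (Function.uncurry k))
    (hk' : Measurable (Function.uncurry k')) (hM : M ≠ ∞)
    (hkM : ∀ y, ∫⁻ x, ‖k x y‖ₑ ^ 2 ∂ν ≤ M) (hkM' : ∀ y, ∫⁻ x, ‖k' x y‖ₑ ^ 2 ∂ν ≤ M)
    (hG : Integrable G μ) (hH : Integrable H μ) :
    Integrable (fun q : α × β × β => k q.1 q.2.1 * k' q.1 q.2.2 * (G q.2.1 * H q.2.2))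
      (ν.prod (μ.prod μ)) := by
  have hGm : AEStronglyMeasurable (fun q : α × β × β => G q.2.1) (ν.prod (μ.prod μ)) :=
    hG.1.comp_fst.comp_snd
  have hHm : AEStronglyMeasurable (fun q : α × β × β => H q.2.2) (ν.prod (μ.prod μ)) :=
    hH.1.comp_snd.comp_snd
  have hkm : Measurable fun q : α × β × β => k q.1 q.2.1 := by fun_prop
  have hkm' : Measurable fun q : α × β × β => k' q.1 q.2.2 := by fun_prop
  have hm : AEStronglyMeasurable
      (fun q : α × β × β => k q.1 q.2.1 * k' q.1 q.2.2 * (G q.2.1 * H q.2.2))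
      (ν.prod (μ.prod μ)) :=
    (hkm.mul hkm').aestronglyMeasurable.mul (hGm.mul hHm)
  refine ⟨hm, ?_⟩
  calc
    _ = ∫⁻ p, (∫⁻ x, ‖k x p.1‖ₑ * ‖k' x p.2‖ₑ ∂ν) * ‖G p.1 * H p.2‖ₑ ∂μ.prod μ := by
      rw [lintegral_prod_symm _ hm.enorm]
      refine lintegral_congr fun p => ?_
      simp only [enorm_mul (k _ _ * k' _ _), enorm_mul (k _ _)]
      exact lintegral_mul_const _ (by fun_prop)
    _ ≤ ∫⁻ p, M * ‖G p.1 * H p.2‖ₑ ∂μ.prod μ := by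
      gcongr with p
      exact lintegral_mul_le_of_lintegral_sq_le (by fun_prop) (by fun_prop) (hkM _) (hkM' _)
    _ = M * ∫⁻ p, ‖G p.1 * H p.2‖ₑ ∂μ.prod μ :=
      lintegral_const_mul'' _ (hG.mul_prod hH).1.enorm
    _ < ∞ := ENNReal.mul_lt_top hM.lt_top (hG.mul_prod hH).2

theorem integral_integral_mul_integral (hk : Measurable (Function.uncurry k))
    (hk' : Measurable (Function.uncurry k')) (hM : M ≠ ∞)
    (hkM : ∀ y, ∫⁻ x, ‖k x y‖ₑ ^ 2 ∂ν ≤ M) (hkM' : ∀ y, ∫⁻ x, ‖k' x y‖ₑ ^ 2 ∂ν ≤ M)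
    (hG : Integrable G μ) (hH : Integrable H μ) :
    ∫ x, (∫ y, k x y * G y ∂μ) * (∫ y, k' x y * H y ∂μ) ∂ν =
      kernelForm μ (fun p => ∫ x, k x p.1 * k' x p.2 ∂ν) G H := by
  have hint := integrable_kernel_mul_kernel hk hk' hM hkM hkM' hG hH
  calc
    _ = ∫ x, ∫ p, k x p.1 * k' x p.2 * (G p.1 * H p.2) ∂μ.prod μ ∂ν := by
      simp only [← integral_prod_mul, mul_mul_mul_comm]
    _ = ∫ p, ∫ x, k x p.1 * k' x p.2 * (G p.1 * H p.2) ∂ν ∂μ.prod μ :=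
      integral_integral_swap hint
    _ = _ := by simp only [integral_mul_const, kernelForm]

/-- The `TT*` identity. -/
theorem lintegral_enorm_integral_sq (hk : Measurable (Function.uncurry k)) (hM : M ≠ ∞)
    (hkM : ∀ y, ∫⁻ x, ‖k x y‖ₑ ^ 2 ∂ν ≤ M) (hG : Integrable G μ) :
    ∫⁻ x, ‖∫ y, k x y * G y ∂μ‖ₑ ^ 2 ∂ν =
      ‖kernelForm μ (fun p => ∫ x, k x p.1 * conj (k x p.2) ∂ν) G fun y => conj (G y)‖ₑ := by
  have hk' : Measurable (Function.uncurry fun x y => conj (k x y)) :=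
    continuous_conj.measurable.comp hk
  have hkM' : ∀ y, ∫⁻ x, ‖conj (k x y)‖ₑ ^ 2 ∂ν ≤ M := by simpa only [RCLike.enorm_conj] using hkM
  have hG' : Integrable (fun y => conj (G y)) μ :=
    (conjCLE : ℂ →L[ℝ] ℂ).integrable_comp hG
  have hconj (x : α) : conj (∫ y, k x y * G y ∂μ) = ∫ y, conj (k x y) * conj (G y) ∂μ := by
    simp only [← integral_conj, map_mul]
  rw [lintegral_enorm_sq_eq_enorm_integral]
  · simp only [hconj]
    rw [integral_integral_mul_integral hk hk' hM hkM hkM' hG hG']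
  · simp only [hconj, ← integral_prod_mul, mul_mul_mul_comm (k _ _) (G _)]
    exact (integrable_kernel_mul_kernel hk hk' hM hkM hkM' hG hG').integral_prod_left

end KernelForm

/-! ### Contractivity on `L²` -/

section HeatKernelL2

variable {a : ℝ} {w : ℂ} {d : ℕ}

lemma measurable_heatKernel_right (d : ℕ) (a : ℝ) (w : ℂ) :
    Measurable fun p : ((Fin d → ℝ) × ℝ) × ((Fin d → ℝ) × ℝ) => heatKernel d a w p.1 p.2 := by
  have h := (measurable_heatKernel d a).comp (measurable_prodMk_left (x := w))
  simpa only [Function.comp_def] using h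

lemma lintegral_enorm_heatKernel_ofReal (ha : -1 < a) {ε : ℝ} (hε : 0 < ε)
    (Y : (Fin d → ℝ) × ℝ) : ∫⁻ X, ‖heatKernel d a ε X Y‖ₑ ∂ωa d a = 1 := by
  have hε' : 0 < (ε : ℂ).re := hε
  have hnorm : ((∫ X, ‖heatKernel d a ε X Y‖ ∂ωa d a : ℝ) : ℂ) = 1 := by
    rw [← integral_complex_ofReal, ← integral_heatKernel ha hε' Y]
    exact integral_congr_ae (.of_forall fun X =>
      (eq_coe_norm_of_nonneg (heatKernel_pos ha hε X Y).le).symm)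
  rw [← ofReal_integral_norm_eq_lintegral_enorm (integrable_heatKernel ha hε' Y),
    ofReal_eq_one.1 hnorm, ENNReal.ofReal_one]

lemma lintegral_enorm_heatKernel_sq_le (ha : 0 ≤ a) (hw : 0 < w.re) (Y : (Fin d → ℝ) × ℝ) :
    ∫⁻ X, ‖heatKernel d a w X Y‖ₑ ^ 2 ∂ωa d a ≤
      ENNReal.ofReal (heatKernelBound d a * (2 * w.re) ^ (-((d + a + 1) / 2))) := by
  have h2w : 0 < 2 * w.re := by positivity
  rw [lintegral_enorm_heatKernel_sq (by linarith) hw, ← ofReal_norm]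
  gcongr
  refine (norm_heatKernel_le d ha (by simpa using h2w.le) (by simpa using hw.ne') Y Y).trans_eq ?_
  rw [norm_real, Real.norm_of_nonneg h2w.le]

theorem lintegral_enorm_integral_heatKernel_sq_le (ha : 0 ≤ a) (hw : 0 < w.re)
    {G : (Fin d → ℝ) × ℝ → ℂ} (hG : Integrable G (ωa d a)) :
    ∫⁻ X, ‖∫ Y, heatKernel d a w X Y * G Y ∂ωa d a‖ₑ ^ 2 ∂ωa d a ≤ ∫⁻ Y, ‖G Y‖ₑ ^ 2 ∂ωa d a := by
  have ha' : -1 < a := by linarith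
  have h2w : 0 < 2 * w.re := by positivity
  rw [lintegral_enorm_integral_sq (measurable_heatKernel_right d a w) ENNReal.ofReal_ne_top
    (lintegral_enorm_heatKernel_sq_le ha hw) hG]
  have hck (p : ((Fin d → ℝ) × ℝ) × ((Fin d → ℝ) × ℝ)) :
      ∫ X, heatKernel d a w X p.1 * conj (heatKernel d a w X p.2) ∂ωa d a =
        heatKernel d a (2 * w.re : ℝ) p.1 p.2 := by
    simp only [conj_heatKernel hw]
    rw [integral_heatKernel_mul_heatKernel ha' hw (by simpa using hw), add_conj]
  simp only [hck, kernelForm]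
  calc
    _ ≤ ∫⁻ p, ‖heatKernel d a (2 * w.re : ℝ) p.1 p.2 * (G p.1 * conj (G p.2))‖ₑ
          ∂(ωa d a).prod (ωa d a) := enorm_integral_le_lintegral_enorm _
    _ = ∫⁻ p, ‖heatKernel d a (2 * w.re : ℝ) p.1 p.2‖ₑ * (‖G p.1‖ₑ * ‖G p.2‖ₑ)
          ∂(ωa d a).prod (ωa d a) := by simp only [enorm_mul, RCLike.enorm_conj]
    _ ≤ _ := by
      refine lintegral_prod_mul_mul_le (measurable_heatKernel_right d a _).enorm hG.1.enorm
        (fun Y => ?_) fun Y => (lintegral_enorm_heatKernel_ofReal ha' h2w Y).le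
      simp only [heatKernel_comm d a _ Y]
      exact (lintegral_enorm_heatKernel_ofReal ha' h2w Y).le

theorem enorm_kernelForm_heatKernel_le (ha : 0 ≤ a) (hw : 0 < w.re)
    {G H : (Fin d → ℝ) × ℝ → ℂ} (hG : Integrable G (ωa d a)) (hH : Integrable H (ωa d a)) :
    ‖kernelForm (ωa d a) (fun p => heatKernel d a w p.1 p.2) G H‖ₑ ≤
      (∫⁻ Y, ‖G Y‖ₑ ^ 2 ∂ωa d a) ^ (1 / 2 : ℝ) * (∫⁻ Y, ‖H Y‖ₑ ^ 2 ∂ωa d a) ^ (1 / 2 : ℝ) := by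
  have hw₂ : 0 < (w / 2).re := by simpa using hw
  have hM := lintegral_enorm_heatKernel_sq_le (d := d) ha hw₂
  have hmeas := measurable_heatKernel_right d a (w / 2)
  have hT {G : (Fin d → ℝ) × ℝ → ℂ} (hG : AEStronglyMeasurable G (ωa d a)) :
      AEStronglyMeasurable (fun X => ∫ Y, heatKernel d a (w / 2) X Y * G Y ∂ωa d a) (ωa d a) :=
    (hmeas.aestronglyMeasurable (μ := (ωa d a).prod (ωa d a))).mul hG.comp_snd
      |>.integral_prod_right'
  have hform : ∫ X, (∫ Y, heatKernel d a (w / 2) X Y * G Y ∂ωa d a) *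
      (∫ Y, heatKernel d a (w / 2) X Y * H Y ∂ωa d a) ∂ωa d a =
        kernelForm (ωa d a) (fun p => heatKernel d a w p.1 p.2) G H := by
    rw [integral_integral_mul_integral hmeas hmeas ENNReal.ofReal_ne_top hM hM hG hH]
    simp only [integral_heatKernel_mul_heatKernel (show -1 < a by linarith) hw₂ hw₂, add_halves]
  rw [← hform]
  calc
    _ ≤ ∫⁻ X, ‖∫ Y, heatKernel d a (w / 2) X Y * G Y ∂ωa d a‖ₑ *
          ‖∫ Y, heatKernel d a (w / 2) X Y * H Y ∂ωa d a‖ₑ ∂ωa d a :=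
      (enorm_integral_le_lintegral_enorm _).trans_eq (by simp only [enorm_mul])
    _ ≤ _ := ENNReal.lintegral_mul_le_Lp_mul_Lq _ Real.HolderConjugate.two_two
      (hT hG.1).enorm (hT hH.1).enorm
    _ ≤ _ := by
      simp only [ENNReal.rpow_two]
      gcongr ?_ ^ _ * ?_ ^ _
      exacts [lintegral_enorm_integral_heatKernel_sq_le ha hw₂ hG,
        lintegral_enorm_integral_heatKernel_sq_le ha hw₂ hH]

end HeatKernelL2

/-! ### Interpolation of bilinear forms -/

section Interpolation

/-- The analytic family `g |g| ^ (p (1 + z) / 2 - 1)` of the Riesz–Thorin argument. The power is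
written with `log ‖g‖`, which keeps it entire in `z` when `g = 0`. -/
def rieszThorinFamily (p : ℝ) (z g : ℂ) : ℂ :=
  g * cexp ((p * (1 + z) / 2 - 1) * Real.log ‖g‖)

variable {p : ℝ} {z : ℂ}

lemma norm_rieszThorinFamily (hp : 0 < p) (hz : 0 ≤ z.re) (g : ℂ) :
    ‖rieszThorinFamily p z g‖ = ‖g‖ ^ (p * (1 + z.re) / 2) := by
  rcases eq_or_ne g 0 with rfl | hg
  · simp [rieszThorinFamily, Real.zero_rpow (show p * (1 + z.re) / 2 ≠ 0 by positivity)]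
  · have hre : ((p * (1 + z) / 2 - 1) * Real.log ‖g‖).re =
        Real.log ‖g‖ * (p * (1 + z.re) / 2 - 1) := by
      rw [re_mul_ofReal]
      simp [mul_comm]
    rw [rieszThorinFamily, norm_mul, norm_exp, hre, ← Real.rpow_def_of_pos (norm_pos_iff.2 hg),
      Real.rpow_sub_one (norm_ne_zero_iff.2 hg), mul_div_cancel₀ _ (norm_ne_zero_iff.2 hg)]

lemma rieszThorinFamily_eq_mul_cexp (p : ℝ) (z g : ℂ) :
    rieszThorinFamily p z g =
      rieszThorinFamily p 0 g * cexp (z * (p / 2 * Real.log ‖g‖ : ℝ)) := by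
  rw [rieszThorinFamily, rieszThorinFamily, mul_assoc, ← Complex.exp_add]
  congr 2
  push_cast
  ring

lemma rieszThorinFamily_mul (p : ℝ) (z g h : ℂ) :
    rieszThorinFamily p z (g * h) = rieszThorinFamily p z g * rieszThorinFamily p z h := by
  rcases eq_or_ne g 0 with rfl | hg
  · simp [rieszThorinFamily]
  rcases eq_or_ne h 0 with rfl | hh
  · simp [rieszThorinFamily]
  simp only [rieszThorinFamily]
  rw [norm_mul, Real.log_mul (norm_ne_zero_iff.2 hg) (norm_ne_zero_iff.2 hh), ofReal_add, mul_add,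
    Complex.exp_add, mul_mul_mul_comm]

lemma rieszThorinFamily_two_div_sub_one (hp : p ≠ 0) (g : ℂ) :
    rieszThorinFamily p ((2 / p - 1 : ℝ) : ℂ) g = g := by
  have hexp : (p * (1 + ((2 / p - 1 : ℝ) : ℂ)) / 2 - 1 : ℂ) = 0 := by
    have : (p : ℂ) ≠ 0 := ofReal_ne_zero.2 hp
    push_cast
    field_simp
    ring
  rw [rieszThorinFamily, hexp, zero_mul, Complex.exp_zero, mul_one]

lemma measurable_rieszThorinFamily (p : ℝ) (z : ℂ) : Measurable (rieszThorinFamily p z) := by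
  unfold rieszThorinFamily
  fun_prop

lemma rpow_le_rpow_add_rpow {u s c t : ℝ} (hu : 0 ≤ u) (hs : 0 ≤ s) (hsc : s ≤ c) (hct : c ≤ t) :
    u ^ c ≤ u ^ s + u ^ t := by
  rcases le_total u 1 with hu₁ | hu₁
  · exact (Real.rpow_le_rpow_of_exponent_ge' hu hu₁ hs hsc).trans
      (le_add_of_nonneg_right (by positivity))
  · exact (Real.rpow_le_rpow_of_exponent_le hu₁ hct).trans
      (le_add_of_nonneg_left (by positivity))

section Strip

open HadamardThreeLines

variable {γ : Type*} {m u : γ → ℂ} {A : ℝ}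

lemma norm_mul_rieszThorinFamily_le (hp : 0 < p) (hmA : ∀ x, ‖m x‖ ≤ A)
    (hz : z ∈ verticalClosedStrip 0 1) (x : γ) :
    ‖m x * rieszThorinFamily p z (u x)‖ ≤ A * (‖u x‖ ^ (p / 2) + ‖u x‖ ^ p) := by
  obtain ⟨hz₀, hz₁⟩ : 0 ≤ z.re ∧ z.re ≤ 1 := hz
  rw [norm_mul, norm_rieszThorinFamily hp hz₀]
  exact mul_le_mul (hmA x) (rpow_le_rpow_add_rpow (norm_nonneg _) (by positivity) (by nlinarith)
    (by nlinarith)) (by positivity) ((norm_nonneg _).trans (hmA x))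

variable [MeasurableSpace γ] {μ : Measure γ}

lemma bddAbove_norm_integral_mul_rieszThorinFamily (hp : 0 < p) (hmA : ∀ x, ‖m x‖ ≤ A)
    (hu₁ : Integrable (fun x => ‖u x‖ ^ (p / 2)) μ) (hu₂ : Integrable (fun x => ‖u x‖ ^ p) μ) :
    BddAbove ((norm ∘ fun z => ∫ x, m x * rieszThorinFamily p z (u x) ∂μ) ''
      verticalClosedStrip 0 1) := by
  refine ⟨∫ x, A * (‖u x‖ ^ (p / 2) + ‖u x‖ ^ p) ∂μ, ?_⟩
  rintro _ ⟨z, hz, rfl⟩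
  exact norm_integral_le_of_norm_le ((hu₁.add hu₂).const_mul A)
    (.of_forall fun x => norm_mul_rieszThorinFamily_le hp hmA hz x)

variable (hp : 0 < p) (hm : AEStronglyMeasurable m μ) (hmA : ∀ x, ‖m x‖ ≤ A)
  (hu : AEStronglyMeasurable u μ) (hu₁ : Integrable (fun x => ‖u x‖ ^ (p / 2)) μ)
  (hu₂ : Integrable (fun x => ‖u x‖ ^ p) μ)

include hp hm hmA hu hu₁ hu₂

lemma integrable_mul_rieszThorinFamily (hz : z ∈ verticalClosedStrip 0 1) :
    Integrable (fun x => m x * rieszThorinFamily p z (u x)) μ :=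
  ((hu₁.add hu₂).const_mul A).mono'
    (hm.mul ((measurable_rieszThorinFamily p z).comp_aemeasurable hu.aemeasurable
      |>.aestronglyMeasurable))
    (.of_forall fun x => norm_mul_rieszThorinFamily_le hp hmA hz x)

lemma diffContOnCl_integral_mul_rieszThorinFamily :
    DiffContOnCl ℂ (fun z => ∫ x, m x * rieszThorinFamily p z (u x) ∂μ) (verticalStrip 0 1) := by
  have hstrip : closure (verticalStrip 0 1) = verticalClosedStrip 0 1 := by
    rw [verticalStrip, verticalClosedStrip, ← closure_Ioo zero_ne_one, closure_preimage_re]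
  have hexp (z : ℂ) (x : γ) : m x * rieszThorinFamily p z (u x) =
      m x * rieszThorinFamily p 0 (u x) * cexp (z * (p / 2 * Real.log ‖u x‖ : ℝ)) := by
    rw [rieszThorinFamily_eq_mul_cexp, mul_assoc]
  have hint {z : ℂ} (hz : z ∈ verticalClosedStrip 0 1) :=
    integrable_mul_rieszThorinFamily hp hm hmA hu hu₁ hu₂ hz
  have hweight (t : ℝ) (ht : (t : ℂ) ∈ verticalClosedStrip 0 1) :
      Integrable (fun x => ‖m x * rieszThorinFamily p 0 (u x)‖ *
        Real.exp (t * (p / 2 * Real.log ‖u x‖))) μ := by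
    refine (hint ht).norm.congr (.of_forall fun x => ?_)
    simp only [hexp (t : ℂ) x, norm_mul _ (cexp _), norm_exp, re_ofReal_mul, ofReal_re]
  constructor
  · intro z hz
    rw [show (fun z => ∫ x, m x * rieszThorinFamily p z (u x) ∂μ) = _ from
      funext fun z => integral_congr_ae (.of_forall (hexp z))]
    exact (hasDerivAt_integral_mul_cexp (hint ⟨le_rfl, zero_le_one⟩).1
      (hu.norm.aemeasurable.log.const_mul _)
      (hweight 0 (by simp [verticalClosedStrip])) (hweight 1 (by simp [verticalClosedStrip]))
      hz.1 hz.2).differentiableAt.differentiableWithinAt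
  · rw [hstrip]
    refine continuousOn_of_dominated (fun z hz => (hint hz).1)
      (fun z hz => .of_forall fun x => norm_mul_rieszThorinFamily_le hp hmA hz x)
      ((hu₁.add hu₂).const_mul A) (.of_forall fun x => ?_)
    simp only [rieszThorinFamily]
    fun_prop

end Strip

section KernelForm

variable {β : Type*} [MeasurableSpace β] {μ : Measure β} {m : β × β → ℂ} {A : ℝ}
  {G H : β → ℂ}

lemma lintegral_enorm_rpow_eq_ofReal (hp : 0 ≤ p) (hG : Integrable (fun y => ‖G y‖ ^ p) μ) :
    ∫⁻ y, ‖G y‖ₑ ^ p ∂μ = ENNReal.ofReal (∫ y, ‖G y‖ ^ p ∂μ) := by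
  rw [ofReal_integral_eq_lintegral_ofReal hG (.of_forall fun _ => by positivity)]
  simp only [← ENNReal.ofReal_rpow_of_nonneg (norm_nonneg _) hp, ofReal_norm]

lemma lintegral_enorm_rieszThorinFamily_sq (hp : 0 < p) (hz : z.re = 0) (G : β → ℂ) :
    ∫⁻ y, ‖rieszThorinFamily p z (G y)‖ₑ ^ 2 ∂μ = ∫⁻ y, ‖G y‖ₑ ^ p ∂μ := by
  refine lintegral_congr fun y => ?_
  rw [← ofReal_norm, norm_rieszThorinFamily hp hz.ge, hz, ← ENNReal.ofReal_pow (by positivity),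
    ← Real.rpow_natCast, ← Real.rpow_mul (norm_nonneg _), ← ofReal_norm,
    ENNReal.ofReal_rpow_of_nonneg (norm_nonneg _) hp.le]
  congr 2
  push_cast
  ring

lemma integrable_rieszThorinFamily (hp : 0 < p) (hz : z.re = 0) (hG : AEStronglyMeasurable G μ)
    (hG₁ : Integrable (fun y => ‖G y‖ ^ (p / 2)) μ) :
    Integrable (fun y => rieszThorinFamily p z (G y)) μ := by
  refine hG₁.mono' ((measurable_rieszThorinFamily p z).comp_aemeasurable hG.aemeasurable
    |>.aestronglyMeasurable) (.of_forall fun y => ?_)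
  rw [norm_rieszThorinFamily hp hz.ge, hz, add_zero, mul_one]

lemma integrable_norm_mul_rpow {c : ℝ} (hG : Integrable (fun y => ‖G y‖ ^ c) μ)
    (hH : Integrable (fun y => ‖H y‖ ^ c) μ) :
    Integrable (fun q : β × β => ‖G q.1 * H q.2‖ ^ c) (μ.prod μ) := by
  simpa only [norm_mul, Real.mul_rpow (norm_nonneg _) (norm_nonneg _)] using hG.mul_prod hH

lemma norm_integral_mul_rieszThorinFamily_le_of_re_eq_zero
    (h₂ : ∀ G H : β → ℂ, Integrable G μ → Integrable H μ → ‖kernelForm μ m G H‖ₑ ≤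
      (∫⁻ y, ‖G y‖ₑ ^ 2 ∂μ) ^ (1 / 2 : ℝ) * (∫⁻ y, ‖H y‖ₑ ^ 2 ∂μ) ^ (1 / 2 : ℝ))
    (hp : 0 < p) (hz : z.re = 0)
    (hG : AEStronglyMeasurable G μ) (hG₁ : Integrable (fun y => ‖G y‖ ^ (p / 2)) μ)
    (hG₂ : Integrable (fun y => ‖G y‖ ^ p) μ)
    (hH : AEStronglyMeasurable H μ) (hH₁ : Integrable (fun y => ‖H y‖ ^ (p / 2)) μ)
    (hH₂ : Integrable (fun y => ‖H y‖ ^ p) μ) :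
    ‖∫ q, m q * rieszThorinFamily p z (G q.1 * H q.2) ∂μ.prod μ‖ ≤
      (∫ y, ‖G y‖ ^ p ∂μ) ^ (1 / 2 : ℝ) * (∫ y, ‖H y‖ ^ p ∂μ) ^ (1 / 2 : ℝ) := by
  have hGH := h₂ _ _ (integrable_rieszThorinFamily hp hz hG hG₁)
    (integrable_rieszThorinFamily hp hz hH hH₁)
  have hG₀ : 0 ≤ ∫ y, ‖G y‖ ^ p ∂μ := integral_nonneg fun _ => by positivity
  have hH₀ : 0 ≤ ∫ y, ‖H y‖ ^ p ∂μ := integral_nonneg fun _ => by positivity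
  rw [lintegral_enorm_rieszThorinFamily_sq hp hz, lintegral_enorm_rieszThorinFamily_sq hp hz,
    lintegral_enorm_rpow_eq_ofReal hp.le hG₂, lintegral_enorm_rpow_eq_ofReal hp.le hH₂,
    ENNReal.ofReal_rpow_of_nonneg hG₀ one_half_pos.le,
    ENNReal.ofReal_rpow_of_nonneg hH₀ one_half_pos.le, ← ENNReal.ofReal_mul (by positivity),
    ← ofReal_norm, ENNReal.ofReal_le_ofReal_iff (by positivity)] at hGH
  simpa only [kernelForm, rieszThorinFamily_mul] using hGH

variable [SFinite μ]

lemma norm_integral_mul_rieszThorinFamily_le_of_re_eq_one (hp : 0 < p)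
    (hmA : ∀ q, ‖m q‖ ≤ A) (hz : z.re = 1)
    (hG : Integrable (fun y => ‖G y‖ ^ p) μ) (hH : Integrable (fun y => ‖H y‖ ^ p) μ) :
    ‖∫ q, m q * rieszThorinFamily p z (G q.1 * H q.2) ∂μ.prod μ‖ ≤
      A * ((∫ y, ‖G y‖ ^ p ∂μ) * ∫ y, ‖H y‖ ^ p ∂μ) := by
  calc
    _ ≤ ∫ q, A * ‖G q.1 * H q.2‖ ^ p ∂μ.prod μ := by
      refine norm_integral_le_of_norm_le ((integrable_norm_mul_rpow hG hH).const_mul A)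
        (.of_forall fun q => ?_)
      rw [norm_mul, norm_rieszThorinFamily hp (by simp [hz]), hz, one_add_one_eq_two,
        mul_div_cancel_right₀ p two_ne_zero]
      exact mul_le_mul_of_nonneg_right (hmA q) (by positivity)
    _ = _ := by
      simp only [norm_mul, Real.mul_rpow (norm_nonneg _) (norm_nonneg _)]
      rw [integral_const_mul, integral_prod_mul (fun y => ‖G y‖ ^ p) fun y => ‖H y‖ ^ p]

/-- The three lines theorem between the trivial `L¹` bound and an `L²` bound. -/
theorem enorm_kernelForm_le_of_sq (hm : AEStronglyMeasurable m (μ.prod μ))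
    (hA : 0 ≤ A) (hmA : ∀ q, ‖m q‖ ≤ A)
    (h₂ : ∀ G H : β → ℂ, Integrable G μ → Integrable H μ → ‖kernelForm μ m G H‖ₑ ≤
      (∫⁻ y, ‖G y‖ₑ ^ 2 ∂μ) ^ (1 / 2 : ℝ) * (∫⁻ y, ‖H y‖ₑ ^ 2 ∂μ) ^ (1 / 2 : ℝ))
    (hp₁ : 1 ≤ p) (hp₂ : p ≤ 2)
    (hG : AEStronglyMeasurable G μ) (hG₁ : Integrable (fun y => ‖G y‖ ^ (p / 2)) μ)
    (hG₂ : Integrable (fun y => ‖G y‖ ^ p) μ)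
    (hH : AEStronglyMeasurable H μ) (hH₁ : Integrable (fun y => ‖H y‖ ^ (p / 2)) μ)
    (hH₂ : Integrable (fun y => ‖H y‖ ^ p) μ) :
    ‖kernelForm μ m G H‖ₑ ≤ ENNReal.ofReal (A ^ (2 / p - 1)) *
      ((∫⁻ y, ‖G y‖ₑ ^ p ∂μ) ^ (1 / p) * (∫⁻ y, ‖H y‖ₑ ^ p ∂μ) ^ (1 / p)) := by
  have hp : 0 < p := by linarith
  have hG₀ : 0 ≤ ∫ y, ‖G y‖ ^ p ∂μ := integral_nonneg fun _ => by positivity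
  have hH₀ : 0 ≤ ∫ y, ‖H y‖ ^ p ∂μ := integral_nonneg fun _ => by positivity
  have hθ₀ : 0 ≤ 2 / p - 1 := by rw [sub_nonneg, le_div_iff₀ hp]; linarith
  have hθ₁ : 2 / p - 1 ≤ 1 := by rw [sub_le_iff_le_add, div_le_iff₀ hp]; linarith
  have hGH : AEStronglyMeasurable (fun q : β × β => G q.1 * H q.2) (μ.prod μ) :=
    hG.comp_fst.mul hH.comp_snd
  have hGH₁ := integrable_norm_mul_rpow hG₁ hH₁
  have hGH₂ := integrable_norm_mul_rpow hG₂ hH₂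
  have hpow {N : ℝ} (hN : 0 ≤ N) :
      (N ^ (1 / 2 : ℝ)) ^ (1 - (2 / p - 1)) * N ^ (2 / p - 1) = N ^ (1 / p) := by
    rw [← Real.rpow_mul hN, ← Real.rpow_add_of_nonneg hN (by linarith) hθ₀]
    congr 1
    field_simp
    ring
  have hinterp := HadamardThreeLines.norm_le_interp_of_mem_verticalClosedStrip₀₁' _
    (z := ((2 / p - 1 : ℝ) : ℂ)) ⟨hθ₀, hθ₁⟩
    (diffContOnCl_integral_mul_rieszThorinFamily hp hm hmA hGH hGH₁ hGH₂)
    (bddAbove_norm_integral_mul_rieszThorinFamily hp hmA hGH₁ hGH₂)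
    (fun z hz => norm_integral_mul_rieszThorinFamily_le_of_re_eq_zero h₂ hp hz hG hG₁ hG₂ hH hH₁
      hH₂)
    fun z hz => norm_integral_mul_rieszThorinFamily_le_of_re_eq_one hp hmA hz hG₂ hH₂
  simp only [rieszThorinFamily_two_div_sub_one hp.ne', ofReal_re] at hinterp
  rw [Real.mul_rpow (by positivity) (by positivity), Real.mul_rpow hA (by positivity),
    Real.mul_rpow hG₀ hH₀, mul_left_comm, mul_mul_mul_comm, hpow hG₀, hpow hH₀] at hinterp
  rw [lintegral_enorm_rpow_eq_ofReal hp.le hG₂, lintegral_enorm_rpow_eq_ofReal hp.le hH₂,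
    ENNReal.ofReal_rpow_of_nonneg hG₀ (by positivity),
    ENNReal.ofReal_rpow_of_nonneg hH₀ (by positivity), ← ENNReal.ofReal_mul (by positivity),
    ← ENNReal.ofReal_mul (by positivity), ← ofReal_norm]
  exact ENNReal.ofReal_le_ofReal hinterp

end KernelForm

end Interpolation

/-! ### The Hardy–Littlewood–Sobolev inequality on the line -/

section HardyLittlewoodSobolev

lemma lintegral_comp_abs (g : ℝ → ℝ≥0∞) : ∫⁻ x, g |x| = 2 * ∫⁻ x in Ioi 0, g x := by
  have hpos : ∫⁻ x in Ioi 0, g |x| = ∫⁻ x in Ioi 0, g x :=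
    setLIntegral_congr_fun measurableSet_Ioi fun x hx => by rw [abs_of_pos hx]
  have hneg : ∫⁻ x in Iic 0, g |x| = ∫⁻ x in Ioi 0, g x := by
    rw [← setLIntegral_congr Iio_ae_eq_Iic, ← hpos]
    have hcomp := (Measure.measurePreserving_neg volume).setLIntegral_comp_preimage_emb
      (MeasurableEquiv.neg ℝ).measurableEmbedding (fun x => g |x|) (Ioi 0)
    simpa using hcomp
  rw [← lintegral_add_compl _ measurableSet_Ioi, compl_Ioi, hpos, hneg, two_mul]

lemma setLIntegral_preimage_abs_sub (g : ℝ → ℝ≥0∞) {S : Set ℝ} (hS : MeasurableSet S) (t : ℝ) :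
    ∫⁻ s in (fun s => |t - s|) ⁻¹' S, g |t - s| = 2 * ∫⁻ x in S ∩ Ioi 0, g x := by
  have hpre : MeasurableSet ((fun s => |t - s|) ⁻¹' S) := hS.preimage (by fun_prop)
  rw [← lintegral_indicator hpre, ← Measure.restrict_restrict hS, ← lintegral_indicator hS,
    ← lintegral_comp_abs, ← lintegral_sub_left_eq_self (fun x => S.indicator g |x|) t]
  rfl

variable {l p q R : ℝ}

lemma setLIntegral_abs_sub_lt_rpow (hl : l < 1) (hR : 0 < R) (t : ℝ) :
    ∫⁻ s in {s | |t - s| < R}, ENNReal.ofReal (|t - s| ^ (-l)) =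
      ENNReal.ofReal (2 * (R ^ (1 - l) / (1 - l))) := by
  have hint : IntegrableOn (fun x : ℝ => x ^ (-l)) (Ioo 0 R) :=
    (intervalIntegrable_iff_integrableOn_Ioo_of_le hR.le).1
      (intervalIntegral.intervalIntegrable_rpow' (by linarith))
  have hval : ∫ x in Ioo 0 R, x ^ (-l) = R ^ (1 - l) / (1 - l) := by
    rw [← integral_Ioc_eq_integral_Ioo, ← intervalIntegral.integral_of_le hR.le,
      integral_rpow (.inl (by linarith)), Real.zero_rpow (by linarith), sub_zero, neg_add_eq_sub]
  rw [ENNReal.ofReal_mul two_pos.le, ENNReal.ofReal_ofNat, ← hval,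
    ofReal_integral_eq_lintegral_ofReal hint]
  · exact setLIntegral_preimage_abs_sub (fun x => ENNReal.ofReal (x ^ (-l))) measurableSet_Iio t
      |>.trans (by rw [Iio_inter_Ioi])
  · exact ae_restrict_of_forall_mem measurableSet_Ioo fun x hx => Real.rpow_nonneg hx.1.le _

lemma setLIntegral_le_abs_sub_rpow_neg_two (hR : 0 < R) (t : ℝ) :
    ∫⁻ s in {s | R ≤ |t - s|}, ENNReal.ofReal (|t - s| ^ (-2 : ℝ)) = ENNReal.ofReal (2 * R⁻¹) := by
  have hval : ∫ x in Ioi R, x ^ (-2 : ℝ) = R⁻¹ := by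
    rw [integral_Ioi_rpow_of_lt (by norm_num) hR]
    norm_num [Real.rpow_neg_one]
  rw [ENNReal.ofReal_mul two_pos.le, ENNReal.ofReal_ofNat, ← hval,
    ofReal_integral_eq_lintegral_ofReal (integrableOn_Ioi_rpow_of_lt (by norm_num) hR)]
  · refine (setLIntegral_preimage_abs_sub (fun x => ENNReal.ofReal (x ^ (-2 : ℝ)))
      measurableSet_Ici t).trans ?_
    rw [inter_eq_left.2 (Ici_subset_Ioi.2 hR), setLIntegral_congr Ioi_ae_eq_Ici]
  · exact ae_restrict_of_forall_mem measurableSet_Ioi fun x hx =>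
      Real.rpow_nonneg (hR.le.trans (le_of_lt hx)) _

/-- The constant of the Hardy–Littlewood–Sobolev inequality for the kernel `|t - s| ^ (-2 / q)`. -/
def hlsConst (q : ℝ) : ℝ := 2 / (1 - 2 / q) + 2 ^ (1 / q)

lemma hlsConst_pos (hq : 2 < q) : 0 < hlsConst q := by
  have : 0 < 1 - 2 / q := by rw [sub_pos, div_lt_one (by linarith)]; exact hq
  unfold hlsConst
  positivity

variable {f : ℝ → ℝ≥0∞}

/-- The part of the kernel near the diagonal is integrated against `f ≤ a`, the rest is estimated
by Hölder's inequality. -/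
lemma setLIntegral_mul_abs_sub_rpow_le_add (hpq : p.HolderConjugate q) (hq : 2 < q)
    (hf : Measurable f) (a : ℝ≥0∞) (hR : 0 < R) (t : ℝ) :
    ∫⁻ s in {s | f s ≤ a}, f s * ENNReal.ofReal (|t - s| ^ (-(2 / q))) ≤
      a * ENNReal.ofReal (2 * (R ^ (1 - 2 / q) / (1 - 2 / q))) +
        (∫⁻ s, f s ^ p) ^ (1 / p) * ENNReal.ofReal (2 * R⁻¹) ^ (1 / q) := by
  have hq₁ : 2 / q < 1 := by rw [div_lt_one (by linarith)]; exact hq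
  have hS : MeasurableSet {s | f s ≤ a} := measurableSet_le hf measurable_const
  have hnear : MeasurableSet {s | |t - s| < R} := measurableSet_lt (by fun_prop) measurable_const
  have hcompl : {s | |t - s| < R}ᶜ = {s | R ≤ |t - s|} := by ext; simp
  rw [← lintegral_add_compl _ hnear, hcompl, Measure.restrict_restrict hnear]
  refine add_le_add ?_ ?_
  · rw [← setLIntegral_abs_sub_lt_rpow hq₁ hR t, ← lintegral_const_mul _ (by fun_prop)]
    refine (setLIntegral_mono' (hnear.inter hS) fun s hs => ?_).trans
      (lintegral_mono_set inter_subset_left)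
    exact mul_le_mul_left hs.2 _
  · have hpow (s : ℝ) : ENNReal.ofReal (|t - s| ^ (-(2 / q))) ^ q =
        ENNReal.ofReal (|t - s| ^ (-2 : ℝ)) := by
      rw [ENNReal.ofReal_rpow_of_nonneg (by positivity) hpq.symm.nonneg,
        ← Real.rpow_mul (abs_nonneg _), neg_mul, div_mul_cancel₀ _ hpq.symm.ne_zero]
    rw [← setLIntegral_le_abs_sub_rpow_neg_two hR t]
    simp only [← hpow]
    refine (lintegral_mono' (Measure.restrict_mono_measure Measure.restrict_le_self _)
      le_rfl).trans <| (ENNReal.lintegral_mul_le_Lp_mul_Lq _ hpq hf.aemeasurable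
        (by fun_prop)).trans ?_
    gcongr
    exacts [one_div_nonneg.2 hpq.nonneg, Measure.restrict_le_self]

lemma setLIntegral_mul_abs_sub_rpow_le (hpq : p.HolderConjugate q) (hq : 2 < q)
    (hf : Measurable f) (hf₁ : ∫⁻ s, f s ^ p ≤ 1) (a : ℝ≥0∞) (t : ℝ) :
    ∫⁻ s in {s | f s ≤ a}, f s * ENNReal.ofReal (|t - s| ^ (-(2 / q))) ≤
      ENNReal.ofReal (hlsConst q) * a ^ (p - 1) := by
  have hp₁ := hpq.sub_one_pos
  have hp := hpq.sub_one_mul_conj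
  induction a with
  | top => simp [ENNReal.top_rpow_of_pos hp₁, hlsConst_pos hq]
  | coe A =>
    rcases eq_or_ne A 0 with rfl | hA
    · rw [setLIntegral_congr_fun (g := 0) (measurableSet_le hf measurable_const)
        fun s hs => by simp [show f s = 0 by simpa using hs]]
      simp
    have hA' : 0 < (A : ℝ) := by positivity
    have hnear : (A : ℝ) * ((A ^ (-p)) ^ (1 - 2 / q)) = A ^ (p - 1) := by
      rw [← Real.rpow_mul hA'.le, mul_comm, ← Real.rpow_add_one hA'.ne']
      congr 1
      have := hpq.symm.ne_zero
      field_simp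
      linarith
    have hfar : ((A : ℝ) ^ (-p))⁻¹ ^ (1 / q) = A ^ (p - 1) := by
      rw [← Real.rpow_neg hA'.le, ← Real.rpow_mul hA'.le]
      congr 1
      have := hpq.symm.ne_zero
      field_simp
      linarith
    refine (setLIntegral_mul_abs_sub_rpow_le_add hpq hq hf A
      (Real.rpow_pos_of_pos hA' (-p)) t).trans ?_
    have hE : (∫⁻ s, f s ^ p) ^ (1 / p) ≤ 1 :=
      ENNReal.rpow_le_one hf₁ (one_div_nonneg.2 hpq.nonneg)
    have hq' : 0 ≤ 1 - 2 / q := by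
      rw [sub_nonneg, div_le_one (by linarith)]
      exact hq.le
    calc
      _ ≤ ENNReal.ofReal A * ENNReal.ofReal (2 * (((A : ℝ) ^ (-p)) ^ (1 - 2 / q) / (1 - 2 / q))) +
          1 * ENNReal.ofReal ((2 * ((A : ℝ) ^ (-p))⁻¹) ^ (1 / q)) := by
        rw [ENNReal.ofReal_coe_nnreal, ENNReal.ofReal_rpow_of_nonneg (by positivity)
          (one_div_nonneg.2 hpq.symm.nonneg)]
        gcongr
      _ = ENNReal.ofReal (hlsConst q * A ^ (p - 1)) := by
        rw [one_mul, ← ENNReal.ofReal_mul hA'.le, ← ENNReal.ofReal_add (by positivity)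
          (by positivity), Real.mul_rpow two_pos.le (by positivity), hfar, hlsConst, add_mul,
          ← hnear]
        congr 2
        ring
      _ = _ := by
        rw [ENNReal.ofReal_mul (hlsConst_pos hq).le, ← ENNReal.ofReal_rpow_of_pos hA',
          ENNReal.ofReal_coe_nnreal]

/-- Exchanging `t` and `s` maps the region `f t < f s` into the region `f s ≤ f t`. -/
lemma lintegral_lintegral_le_two_mul {k : ℝ → ℝ → ℝ≥0∞} (hf : Measurable f)
    (hk : Measurable (Function.uncurry k)) (hsymm : ∀ t s, k t s = k s t) :
    ∫⁻ t, ∫⁻ s, f t * f s * k t s ≤ 2 * ∫⁻ t, f t * ∫⁻ s in {s | f s ≤ f t}, f s * k t s := by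
  let T (t : ℝ) : ℝ → ℝ≥0∞ := {s | f s ≤ f t}.indicator fun s => f t * (f s * k t s)
  have hT : Measurable (Function.uncurry T) := by
    have hset : MeasurableSet {P : ℝ × ℝ | f P.2 ≤ f P.1} :=
      measurableSet_le (by fun_prop) (by fun_prop)
    have hfun : Measurable fun P : ℝ × ℝ => f P.1 * (f P.2 * k P.1 P.2) := by fun_prop
    exact hfun.indicator hset
  calc
    _ ≤ ∫⁻ t, ∫⁻ s, (T t s + T s t) := by
      refine lintegral_mono fun t => lintegral_mono fun s => ?_
      rcases le_total (f s) (f t) with h | h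
      · refine le_add_right (le_of_eq ?_)
        rw [show T t s = _ from indicator_of_mem (s := {s | f s ≤ f t}) h _, mul_assoc]
      · refine le_add_left (le_of_eq ?_)
        rw [show T s t = _ from indicator_of_mem (s := {t | f t ≤ f s}) h _, hsymm, mul_assoc,
          mul_left_comm]
    _ = 2 * ∫⁻ t, ∫⁻ s, T t s := by
      have hTt (t : ℝ) : Measurable (T t) := hT.comp measurable_prodMk_left
      simp_rw [lintegral_add_left (hTt _)]
      have hTint : Measurable fun t => ∫⁻ s, T t s := hT.lintegral_prod_right'
      rw [lintegral_add_left hTint,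
        lintegral_lintegral_swap (f := fun t s => T s t) (hT.comp measurable_swap).aemeasurable,
        two_mul]
    _ = _ := by
      congr 1
      refine lintegral_congr fun t => ?_
      rw [lintegral_indicator (measurableSet_le hf measurable_const), lintegral_const_mul]
      fun_prop

lemma lintegral_lintegral_mul_abs_sub_rpow_le_of_le_one (hpq : p.HolderConjugate q) (hq : 2 < q)
    (hf : Measurable f) (hf₁ : ∫⁻ t, f t ^ p ≤ 1) :
    ∫⁻ t, ∫⁻ s, f t * f s * ENNReal.ofReal (|t - s| ^ (-(2 / q))) ≤
      ENNReal.ofReal (2 * hlsConst q) := by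
  have hp₁ := hpq.sub_one_pos
  calc
    _ ≤ 2 * ∫⁻ t, f t * ∫⁻ s in {s | f s ≤ f t}, f s * ENNReal.ofReal (|t - s| ^ (-(2 / q))) :=
      lintegral_lintegral_le_two_mul hf (by fun_prop) fun t s => by rw [abs_sub_comm]
    _ ≤ 2 * ∫⁻ t, ENNReal.ofReal (hlsConst q) * f t ^ p := by
      refine mul_le_mul_right (lintegral_mono fun t => ?_) _
      have hft : f t * f t ^ (p - 1) = f t ^ p := by
        simpa using (ENNReal.rpow_add_of_nonneg (x := f t) 1 (p - 1) zero_le_one hp₁.le).symm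
      rw [← hft, mul_left_comm]
      exact mul_le_mul_right (setLIntegral_mul_abs_sub_rpow_le hpq hq hf hf₁ (f t) t) _
    _ ≤ 2 * (ENNReal.ofReal (hlsConst q) * 1) := by
      rw [lintegral_const_mul _ (hf.pow_const p)]
      gcongr
    _ = _ := by rw [mul_one, ENNReal.ofReal_mul two_pos.le, ENNReal.ofReal_ofNat]

theorem lintegral_lintegral_mul_abs_sub_rpow_le (hpq : p.HolderConjugate q) (hq : 2 < q)
    (hf : Measurable f) :
    ∫⁻ t, ∫⁻ s, f t * f s * ENNReal.ofReal (|t - s| ^ (-(2 / q))) ≤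
      ENNReal.ofReal (2 * hlsConst q) * ((∫⁻ t, f t ^ p) ^ (1 / p)) ^ 2 := by
  set N := (∫⁻ t, f t ^ p) ^ (1 / p) with hN
  have hNp : N ^ p = ∫⁻ t, f t ^ p := by
    rw [hN, ← ENNReal.rpow_mul, one_div_mul_cancel hpq.ne_zero, ENNReal.rpow_one]
  rcases eq_or_ne N 0 with hN₀ | hN₀
  · have hf₀ : f =ᵐ[volume] 0 := by
      rw [hN₀, ENNReal.zero_rpow_of_pos hpq.pos, eq_comm,
        lintegral_eq_zero_iff (hf.pow_const p)] at hNp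
      filter_upwards [hNp] with t ht using (ENNReal.rpow_eq_zero_iff_of_pos hpq.pos).1 ht
    rw [lintegral_congr_ae (g := 0) (hf₀.mono fun t ht => by simp [ht])]
    simp
  rcases eq_or_ne N ∞ with hN₁ | hN₁
  · simp [hN₁, hlsConst_pos hq]
  have hnorm : ∫⁻ t, (N⁻¹ * f t) ^ p ≤ 1 := by
    simp_rw [ENNReal.mul_rpow_of_nonneg _ _ hpq.nonneg]
    rw [lintegral_const_mul _ (hf.pow_const p), ← hNp, ← ENNReal.mul_rpow_of_nonneg _ _ hpq.nonneg,
      ENNReal.inv_mul_cancel hN₀ hN₁, ENNReal.one_rpow]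
  have hscaled := lintegral_lintegral_mul_abs_sub_rpow_le_of_le_one hpq hq (hf.const_mul N⁻¹) hnorm
  have hcalc (t : ℝ) : ∫⁻ s, N⁻¹ * f t * (N⁻¹ * f s) * ENNReal.ofReal (|t - s| ^ (-(2 / q))) =
      N⁻¹ ^ 2 * ∫⁻ s, f t * f s * ENNReal.ofReal (|t - s| ^ (-(2 / q))) := by
    rw [← lintegral_const_mul _ (by fun_prop)]
    exact lintegral_congr fun s => by ring
  have hmeas : Measurable fun P : ℝ × ℝ =>
      f P.1 * f P.2 * ENNReal.ofReal (|P.1 - P.2| ^ (-(2 / q))) := by fun_prop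
  rw [lintegral_congr hcalc, lintegral_const_mul _ hmeas.lintegral_prod_right', ← ENNReal.inv_pow,
    mul_comm, ← div_eq_mul_inv] at hscaled
  exact (ENNReal.div_le_iff (by positivity) (by finiteness)).1 hscaled

end HardyLittlewoodSobolev

/-! ### The regularised space-time estimate -/

section SpaceTime

section MixedNorm

variable {α : Type*} [MeasurableSpace α] {μ : Measure α} {q r : ℝ} {F G : α × ℝ → ℂ}

/-- The mixed norm `‖F‖_{L^q_t L^r_x}` of a function of `(x, t)`, with `μ` the measure in `x`. -/
def mixedNorm (μ : Measure α) (q r : ℝ) (F : α × ℝ → ℂ) : ℝ≥0∞ :=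
  (∫⁻ t, (∫⁻ x, ‖F (x, t)‖ₑ ^ r ∂μ) ^ (q / r)) ^ (1 / q)

lemma mixedNorm_mono (hq : 0 ≤ q) (hr : 0 ≤ r) (hFG : ∀ P, ‖F P‖ₑ ≤ ‖G P‖ₑ) :
    mixedNorm μ q r F ≤ mixedNorm μ q r G := by
  unfold mixedNorm
  gcongr with t x
  exact hFG _

lemma mixedNorm_self [SFinite μ] {p : ℝ} (hp : 0 < p) (hF : AEMeasurable F (μ.prod volume)) :
    mixedNorm μ p p F = eLpNorm F (ENNReal.ofReal p) (μ.prod volume) := by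
  rw [mixedNorm, div_self hp.ne', eLpNorm_eq_lintegral_rpow_enorm_toReal (by simpa using hp)
    ENNReal.ofReal_ne_top, ENNReal.toReal_ofReal hp.le,
    lintegral_prod_symm _ (hF.enorm.pow_const p)]
  simp only [ENNReal.rpow_one]

end MixedNorm

lemma measurePreserving_prodProdProdComm {α β γ δ : Type*} [MeasurableSpace α] [MeasurableSpace β]
    [MeasurableSpace γ] [MeasurableSpace δ] (μa : Measure α) (μb : Measure β) (μc : Measure γ)
    (μd : Measure δ) [SFinite μa] [SFinite μb] [SFinite μc] [SFinite μd] :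
    MeasurePreserving (fun p : (α × β) × (γ × δ) => ((p.1.1, p.2.1), (p.1.2, p.2.2)))
      ((μa.prod μb).prod (μc.prod μd)) ((μa.prod μc).prod (μb.prod μd)) := by
  have hswap : MeasurePreserving (fun p : β × (γ × δ) => (p.2.1, (p.1, p.2.2)))
      (μb.prod (μc.prod μd)) (μc.prod (μb.prod μd)) :=
    (measurePreserving_prodAssoc μc μb μd).comp <|
      (Measure.measurePreserving_swap.prod (.id μd)).comp
        (measurePreserving_prodAssoc μb μc μd).symm
  exact (measurePreserving_prodAssoc μa μc (μb.prod μd)).symm.comp <|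
    ((MeasurePreserving.id μa).prod hswap).comp (measurePreserving_prodAssoc μa μb (μc.prod μd))

lemma enorm_kernelForm_prod_le {α β : Type*} [MeasurableSpace α] [MeasurableSpace β]
    {μ : Measure α} {τ : Measure β} [SFinite μ] [SFinite τ] {m : (α × β) × (α × β) → ℂ}
    (hm : AEStronglyMeasurable m ((μ.prod τ).prod (μ.prod τ))) {A : ℝ} (hmA : ∀ p, ‖m p‖ ≤ A)
    {G H : α × β → ℂ} (hG : Integrable G (μ.prod τ)) (hH : Integrable H (μ.prod τ)) :
    ‖kernelForm (μ.prod τ) m G H‖ₑ ≤ ∫⁻ t, ∫⁻ s, ‖kernelForm μ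
      (fun p => m ((p.1, t), (p.2, s))) (fun x => G (x, t)) fun x => H (x, s)‖ₑ ∂τ ∂τ := by
  have he := measurePreserving_prodProdProdComm μ μ τ τ
  have hint : Integrable (fun p => m p * (G p.1 * H p.2)) ((μ.prod τ).prod (μ.prod τ)) :=
    (hG.mul_prod hH).bdd_mul hm (ae_of_all _ hmA)
  have hint' : Integrable (fun T : (α × α) × (β × β) => m ((T.1.1, T.2.1), (T.1.2, T.2.2)) *
      (G (T.1.1, T.2.1) * H (T.1.2, T.2.2))) ((μ.prod μ).prod (τ.prod τ)) :=
    (he.integrable_comp hint.1).2 hint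
  calc
    _ = ‖∫ T, kernelForm μ (fun p => m ((p.1, T.1), (p.2, T.2))) (fun x => G (x, T.1))
          (fun x => H (x, T.2)) ∂τ.prod τ‖ₑ := by
      rw [kernelForm, ← he.map_eq, integral_map he.aemeasurable (by rw [he.map_eq]; exact hint.1),
        integral_prod_symm _ hint']
      rfl
    _ ≤ _ := (enorm_integral_le_lintegral_enorm _).trans (lintegral_prod_le _)

variable {d : ℕ} {a ε t p : ℝ}

lemma norm_heatKernel_sub_I_mul_le (d : ℕ) (ha : 0 ≤ a) (hε : 0 ≤ ε) (ht : t ≠ 0)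
    (X Y : (Fin d → ℝ) × ℝ) : ‖heatKernel d a (ε - I * t) X Y‖ ≤
      heatKernelBound d a * |t| ^ (-((d + a + 1) / 2)) := by
  have ht' : |t| ≤ ‖(ε - I * t : ℂ)‖ := by simpa using abs_im_le_norm (ε - I * t : ℂ)
  refine (norm_heatKernel_le d ha (by simpa using hε) ?_ X Y).trans ?_
  · exact norm_pos_iff.1 ((abs_pos.2 ht).trans_le ht')
  · have := heatKernelBound_pos d (show -1 < a by linarith)
    gcongr heatKernelBound d a * ?_
    exact Real.rpow_le_rpow_of_nonpos (abs_pos.2 ht) ht'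
      (by simp only [Left.neg_nonpos_iff]; positivity)

lemma norm_heatKernel_sub_I_mul_le_of_pos (d : ℕ) (ha : 0 ≤ a) (hε : 0 < ε) (t : ℝ)
    (X Y : (Fin d → ℝ) × ℝ) : ‖heatKernel d a (ε - I * t) X Y‖ ≤
      heatKernelBound d a * ε ^ (-((d + a + 1) / 2)) := by
  have hε' : ε ≤ ‖(ε - I * t : ℂ)‖ := by simpa using re_le_norm (ε - I * t : ℂ)
  refine (norm_heatKernel_le d ha (by simpa using hε.le) ?_ X Y).trans ?_
  · exact norm_pos_iff.1 (hε.trans_le hε')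
  · have := heatKernelBound_pos d (show -1 < a by linarith)
    gcongr heatKernelBound d a * ?_
    exact Real.rpow_le_rpow_of_nonpos hε hε' (by simp only [Left.neg_nonpos_iff]; positivity)

theorem enorm_kernelForm_heatKernel_le_mul_rpow (ha : 0 ≤ a) (hε : 0 < ε) (ht : t ≠ 0)
    (hp₁ : 1 ≤ p) (hp₂ : p ≤ 2) {G H : (Fin d → ℝ) × ℝ → ℂ}
    (hG : AEStronglyMeasurable G (ωa d a)) (hG₁ : Integrable (fun Y => ‖G Y‖ ^ (p / 2)) (ωa d a))
    (hG₂ : Integrable (fun Y => ‖G Y‖ ^ p) (ωa d a))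
    (hH : AEStronglyMeasurable H (ωa d a)) (hH₁ : Integrable (fun Y => ‖H Y‖ ^ (p / 2)) (ωa d a))
    (hH₂ : Integrable (fun Y => ‖H Y‖ ^ p) (ωa d a)) :
    ‖kernelForm (ωa d a) (fun q => heatKernel d a (ε - I * t) q.1 q.2) G H‖ₑ ≤
      ENNReal.ofReal ((heatKernelBound d a * |t| ^ (-((d + a + 1) / 2))) ^ (2 / p - 1)) *
        ((∫⁻ Y, ‖G Y‖ₑ ^ p ∂ωa d a) ^ (1 / p) * (∫⁻ Y, ‖H Y‖ₑ ^ p ∂ωa d a) ^ (1 / p)) :=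
  enorm_kernelForm_le_of_sq (measurable_heatKernel_right d a _).aestronglyMeasurable
    (mul_nonneg (heatKernelBound_pos d (by linarith)).le (by positivity))
    (fun _ => norm_heatKernel_sub_I_mul_le d ha hε.le ht _ _)
    (fun _ _ hG hH => enorm_kernelForm_heatKernel_le ha (by simpa using hε) hG hH)
    hp₁ hp₂ hG hG₁ hG₂ hH hH₁ hH₂

variable {F : ((Fin d → ℝ) × ℝ) × ℝ → ℂ}

lemma measurable_heatKernel_sub_I_mul (d : ℕ) (a ε : ℝ) :
    Measurable (Function.uncurry fun (X : (Fin d → ℝ) × ℝ) (P : ((Fin d → ℝ) × ℝ) × ℝ) =>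
      heatKernel d a (ε - I * P.2) X P.1) := by
  have hmap : Measurable fun p : ((Fin d → ℝ) × ℝ) × (((Fin d → ℝ) × ℝ) × ℝ) =>
      ((ε - I * p.2.2 : ℂ), (p.1, p.2.1)) := by fun_prop
  have h := (measurable_heatKernel d a).comp hmap
  simpa only [Function.comp_def, Function.uncurry_def] using h

/-- The operator `𝕋_a`, regularised by giving the imaginary time `-it` the real part `ε`, so that
its kernel is bounded when `0 < ε`. -/
def dualEvolution (d : ℕ) (a ε : ℝ) (F : ((Fin d → ℝ) × ℝ) × ℝ → ℂ) (X : (Fin d → ℝ) × ℝ) : ℂ :=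
  ∫ P, heatKernel d a (ε - I * (P.2 : ℝ)) X P.1 * F P ∂(ωa d a).prod volume

lemma measurable_dualEvolution (a ε : ℝ) (hFm : Measurable F) :
    Measurable (dualEvolution d a ε F) :=
  ((measurable_heatKernel_sub_I_mul d a ε).mul
    (hFm.comp measurable_snd)).stronglyMeasurable.integral_prod_right'.measurable

lemma lintegral_enorm_dualEvolution_sq (ha : 0 ≤ a) (hε : 0 < ε)
    (hF : Integrable F ((ωa d a).prod volume)) :
    ∫⁻ X, ‖dualEvolution d a ε F X‖ₑ ^ 2 ∂ωa d a =
      ‖kernelForm ((ωa d a).prod volume)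
        (fun p => heatKernel d a ((2 * ε : ℝ) - I * (p.1.2 - p.2.2 : ℝ)) p.1.1 p.2.1) F
          fun P => conj (F P)‖ₑ := by
  have hre (t : ℝ) : 0 < (ε - I * t : ℂ).re := by simpa using hε
  have hform (P Q : ((Fin d → ℝ) × ℝ) × ℝ) :
      ∫ X, heatKernel d a (ε - I * P.2) X P.1 * conj (heatKernel d a (ε - I * Q.2) X Q.1) ∂ωa d a =
        heatKernel d a ((2 * ε : ℝ) - I * (P.2 - Q.2 : ℝ)) P.1 Q.1 := by
    simp only [conj_heatKernel (hre _)]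
    rw [integral_heatKernel_mul_heatKernel (by linarith) (hre _) (by simpa using hε)]
    congr 1
    simp only [map_sub, map_mul, conj_I, conj_ofReal]
    push_cast
    ring
  have hcol (P : ((Fin d → ℝ) × ℝ) × ℝ) :
      ∫⁻ X, ‖heatKernel d a (ε - I * P.2) X P.1‖ₑ ^ 2 ∂ωa d a ≤
        ENNReal.ofReal (heatKernelBound d a * (2 * ε) ^ (-((d + a + 1) / 2))) := by
    simpa using lintegral_enorm_heatKernel_sq_le ha (hre P.2) P.1
  unfold dualEvolution
  rw [lintegral_enorm_integral_sq (measurable_heatKernel_sub_I_mul d a ε) ENNReal.ofReal_ne_top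
    hcol hF]
  simp only [hform]

/-- The square of the constant in the dual Strichartz estimate. -/
def strichartzConstSq (d : ℕ) (a q r : ℝ) : ℝ :=
  heatKernelBound d a ^ (1 - 2 / r) * (2 * hlsConst q)

variable {q q' r r' : ℝ}

lemma strichartzConstSq_pos (d : ℕ) (ha : -1 < a) (hq : 2 < q) (r : ℝ) :
    0 < strichartzConstSq d a q r := by
  have := heatKernelBound_pos d ha
  have := hlsConst_pos hq
  unfold strichartzConstSq
  positivity

lemma dispersive_rpow_two_div_sub_one (d : ℕ) (ha : -1 < a) (hr : r'.HolderConjugate r)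
    (hrel : 2 / q = (d + a + 1) * (1 / 2 - 1 / r)) (u : ℝ) :
    (heatKernelBound d a * |u| ^ (-((d + a + 1) / 2))) ^ (2 / r' - 1) =
      heatKernelBound d a ^ (1 - 2 / r) * |u| ^ (-(2 / q)) := by
  have hr' : 2 / r' - 1 = 1 - 2 / r := by
    have := hr.inv_add_inv_eq_one
    linear_combination 2 * this
  rw [Real.mul_rpow (heatKernelBound_pos d ha).le (by positivity), hr',
    ← Real.rpow_mul (abs_nonneg u)]
  congr 2
  linear_combination hrel

lemma ae_enorm_kernelForm_slice_le (ha : 0 ≤ a) (hε : 0 < ε) (hr : r'.HolderConjugate r)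
    (hr₂ : 2 ≤ r) (hrel : 2 / q = (d + a + 1) * (1 / 2 - 1 / r)) (hFm : Measurable F)
    (hF₁ : Integrable (fun P => ‖F P‖ ^ (r' / 2)) ((ωa d a).prod volume))
    (hF₂ : Integrable (fun P => ‖F P‖ ^ r') ((ωa d a).prod volume)) :
    ∀ᵐ t : ℝ, ∀ᵐ s : ℝ,
      ‖kernelForm (ωa d a) (fun p => heatKernel d a (ε - I * (t - s : ℝ)) p.1 p.2)
        (fun Y => F (Y, t)) fun Y => conj (F (Y, s))‖ₑ ≤
      ENNReal.ofReal (heatKernelBound d a ^ (1 - 2 / r)) *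
        ((∫⁻ Y, ‖F (Y, t)‖ₑ ^ r' ∂ωa d a) ^ (1 / r') *
          (∫⁻ Y, ‖F (Y, s)‖ₑ ^ r' ∂ωa d a) ^ (1 / r') *
            ENNReal.ofReal (|t - s| ^ (-(2 / q)))) := by
  have hr₂' : r' ≤ 2 := hr.symm.conjugate_eq ▸ by
    rw [div_le_iff₀ (by linarith)]; linarith
  have hslice (t : ℝ) : AEStronglyMeasurable (fun Y => F (Y, t)) (ωa d a) :=
    (hFm.comp measurable_prodMk_right).aestronglyMeasurable
  have hB := heatKernelBound_pos d (show -1 < a by linarith)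
  filter_upwards [hF₁.prod_left_ae, hF₂.prod_left_ae] with t ht₁ ht₂
  filter_upwards [hF₁.prod_left_ae, hF₂.prod_left_ae, Measure.ae_ne volume t] with s hs₁ hs₂ hst
  have h := enorm_kernelForm_heatKernel_le_mul_rpow ha hε (sub_ne_zero.2 hst.symm) hr.lt.le hr₂'
    (hslice t) ht₁ ht₂ (continuous_conj.comp_aestronglyMeasurable (hslice s))
    (by simpa only [RCLike.norm_conj] using hs₁) (by simpa only [RCLike.norm_conj] using hs₂)
  rw [dispersive_rpow_two_div_sub_one d (by linarith) hr hrel,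
    ENNReal.ofReal_mul (by positivity), mul_assoc, mul_comm (ENNReal.ofReal (|t - s| ^ _))] at h
  simpa only [RCLike.enorm_conj] using h

lemma enorm_kernelForm_heatKernel_sub_I_mul_le (ha : 0 ≤ a) (hε : 0 < ε)
    (hq : q'.HolderConjugate q) (hq₂ : 2 < q) (hr : r'.HolderConjugate r) (hr₂ : 2 ≤ r)
    (hrel : 2 / q = (d + a + 1) * (1 / 2 - 1 / r)) (hFm : Measurable F)
    (hF : Integrable F ((ωa d a).prod volume))
    (hF₁ : Integrable (fun P => ‖F P‖ ^ (r' / 2)) ((ωa d a).prod volume))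
    (hF₂ : Integrable (fun P => ‖F P‖ ^ r') ((ωa d a).prod volume)) :
    ‖kernelForm ((ωa d a).prod volume)
        (fun p => heatKernel d a (ε - I * (p.1.2 - p.2.2 : ℝ)) p.1.1 p.2.1) F
          fun P => conj (F P)‖ₑ ≤
      ENNReal.ofReal (strichartzConstSq d a q r) * mixedNorm (ωa d a) q' r' F ^ 2 := by
  set f : ℝ → ℝ≥0∞ := fun t => (∫⁻ Y, ‖F (Y, t)‖ₑ ^ r' ∂ωa d a) ^ (1 / r') with hf
  have hfm : Measurable f := (hFm.enorm.pow_const r').lintegral_prod_left'.pow_const _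
  set m : (((Fin d → ℝ) × ℝ) × ℝ) × (((Fin d → ℝ) × ℝ) × ℝ) → ℂ := fun p =>
    heatKernel d a (ε - I * (p.1.2 - p.2.2 : ℝ)) p.1.1 p.2.1
  have hm : Measurable m := by
    have hmap : Measurable fun p : (((Fin d → ℝ) × ℝ) × ℝ) × (((Fin d → ℝ) × ℝ) × ℝ) =>
        ((ε - I * (p.1.2 - p.2.2 : ℝ) : ℂ), (p.1.1, p.2.1)) := by fun_prop
    simpa only [Function.comp_def] using (measurable_heatKernel d a).comp hmap
  have hFconj : Integrable (fun P => conj (F P)) ((ωa d a).prod volume) :=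
    conjLIE.toLinearIsometry.toContinuousLinearMap.integrable_comp hF
  have hprod := enorm_kernelForm_prod_le (m := m) hm.aestronglyMeasurable
    (fun _ => norm_heatKernel_sub_I_mul_le_of_pos d ha hε _ _ _) hF hFconj
  have hB := heatKernelBound_pos d (show -1 < a by linarith)
  calc
    _ ≤ ∫⁻ t, ∫⁻ s, ‖kernelForm (ωa d a)
          (fun p => heatKernel d a (ε - I * (t - s : ℝ)) p.1 p.2) (fun Y => F (Y, t))
            fun Y => conj (F (Y, s))‖ₑ := hprod
    _ ≤ ∫⁻ t, ∫⁻ s, ENNReal.ofReal (heatKernelBound d a ^ (1 - 2 / r)) *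
          (f t * f s * ENNReal.ofReal (|t - s| ^ (-(2 / q)))) :=
      lintegral_mono_ae <| (ae_enorm_kernelForm_slice_le ha hε hr hr₂ hrel hFm hF₁ hF₂).mono
        fun _ ht => lintegral_mono_ae ht
    _ = ENNReal.ofReal (heatKernelBound d a ^ (1 - 2 / r)) *
          ∫⁻ t, ∫⁻ s, f t * f s * ENNReal.ofReal (|t - s| ^ (-(2 / q))) := by
      simp only [lintegral_const_mul' _ _ ENNReal.ofReal_ne_top]
    _ ≤ _ := by
      rw [strichartzConstSq, ENNReal.ofReal_mul (by positivity), mul_assoc]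
      gcongr
      refine (lintegral_lintegral_mul_abs_sub_rpow_le hq hq₂ hfm).trans_eq ?_
      simp only [mixedNorm, hf, ← ENNReal.rpow_mul, one_div_mul_eq_div]

theorem lintegral_enorm_dualEvolution_sq_le (ha : 0 ≤ a) (hε : 0 < ε)
    (hq : q'.HolderConjugate q) (hq₂ : 2 < q) (hr : r'.HolderConjugate r) (hr₂ : 2 ≤ r)
    (hrel : 2 / q = (d + a + 1) * (1 / 2 - 1 / r)) (hFm : Measurable F)
    (hF : Integrable F ((ωa d a).prod volume))
    (hF₁ : Integrable (fun P => ‖F P‖ ^ (r' / 2)) ((ωa d a).prod volume))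
    (hF₂ : Integrable (fun P => ‖F P‖ ^ r') ((ωa d a).prod volume)) :
    ∫⁻ X, ‖dualEvolution d a ε F X‖ₑ ^ 2 ∂ωa d a ≤
      ENNReal.ofReal (strichartzConstSq d a q r) * mixedNorm (ωa d a) q' r' F ^ 2 := by
  rw [lintegral_enorm_dualEvolution_sq ha hε hF]
  exact enorm_kernelForm_heatKernel_sub_I_mul_le ha (by positivity) hq hq₂ hr hr₂ hrel hFm hF hF₁
    hF₂

end SpaceTime

/-! ### Removing the regularisation -/

section Limits

variable {α : Type*} [MeasurableSpace α] {ν : Measure α}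

/-- Fatou's lemma. The alternative `U x = 0` covers the points where an integral defining `U` takes
the junk value. -/
lemma lintegral_enorm_sq_le_of_tendsto {u : ℕ → α → ℂ} {U : α → ℂ} {B : ℝ≥0∞}
    (hu : ∀ n, Measurable (u n)) (hB : ∀ n, ∫⁻ x, ‖u n x‖ₑ ^ 2 ∂ν ≤ B)
    (hlim : ∀ᵐ x ∂ν, U x = 0 ∨ Tendsto (fun n => u n x) atTop (𝓝 (U x))) :
    ∫⁻ x, ‖U x‖ₑ ^ 2 ∂ν ≤ B :=
  calc
    _ ≤ ∫⁻ x, liminf (fun n => ‖u n x‖ₑ ^ 2) atTop ∂ν := by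
      refine lintegral_mono_ae (hlim.mono ?_)
      rintro x (hx | hx)
      · simp [hx]
      · exact ((ENNReal.continuous_pow 2).tendsto _ |>.comp hx.enorm).liminf_eq.ge
    _ ≤ liminf (fun n => ∫⁻ x, ‖u n x‖ₑ ^ 2 ∂ν) atTop :=
      lintegral_liminf_le fun n => (hu n).enorm.pow_const 2
    _ ≤ B := (liminf_le_liminf (.of_forall hB)).trans_eq (liminf_const B)

variable {d : ℕ} {a δ ε q q' r r' : ℝ} {F : ((Fin d → ℝ) × ℝ) × ℝ → ℂ}

lemma norm_heatKernel_sub_I_mul_mul_le (ha : 0 ≤ a) (hε : 0 ≤ ε) (hδ : 0 < δ)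
    (hFδ : ∀ P, |P.2| < δ → F P = 0) (X : (Fin d → ℝ) × ℝ) (P : ((Fin d → ℝ) × ℝ) × ℝ) :
    ‖heatKernel d a (ε - I * P.2) X P.1 * F P‖ ≤
      heatKernelBound d a * δ ^ (-((d + a + 1) / 2)) * ‖F P‖ := by
  have hB := heatKernelBound_pos d (show -1 < a by linarith)
  rcases lt_or_ge |P.2| δ with hP | hP
  · simp [hFδ P hP]
  · rw [norm_mul]
    gcongr
    refine (norm_heatKernel_sub_I_mul_le d ha hε (abs_pos.1 (hδ.trans_le hP)) X P.1).trans ?_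
    gcongr heatKernelBound d a * ?_
    exact Real.rpow_le_rpow_of_nonpos hδ hP (by simp only [Left.neg_nonpos_iff]; positivity)

lemma aestronglyMeasurable_heatKernel_sub_I_mul_mul (a ε : ℝ)
    (hF : AEStronglyMeasurable F ((ωa d a).prod volume)) (X : (Fin d → ℝ) × ℝ) :
    AEStronglyMeasurable (fun P => heatKernel d a (ε - I * (P.2 : ℝ)) X P.1 * F P)
      ((ωa d a).prod volume) :=
  ((measurable_heatKernel_sub_I_mul d a ε).comp
    measurable_prodMk_left).aestronglyMeasurable.mul hF

lemma tendsto_dualEvolution (ha : 0 ≤ a) (hδ : 0 < δ) (hF : Integrable F ((ωa d a).prod volume))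
    (hFδ : ∀ P, |P.2| < δ → F P = 0) (X : (Fin d → ℝ) × ℝ) :
    Tendsto (fun ε => dualEvolution d a ε F X) (𝓝[>] 0) (𝓝 (dualEvolution d a 0 F X)) := by
  refine tendsto_integral_filter_of_dominated_convergence _
    (.of_forall fun ε => aestronglyMeasurable_heatKernel_sub_I_mul_mul a ε hF.1 X) ?_
    (hF.norm.const_mul (heatKernelBound d a * δ ^ (-((d + a + 1) / 2)))) (ae_of_all _ fun P => ?_)
  · filter_upwards [self_mem_nhdsWithin] with ε hε
    exact ae_of_all _ (norm_heatKernel_sub_I_mul_mul_le ha (le_of_lt hε) hδ hFδ X)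
  · rcases lt_or_ge |P.2| δ with hP | hP
    · simp [hFδ P hP]
    · have hslit : ((0 : ℝ) - I * P.2 : ℂ) ∈ slitPlane :=
        Or.inr (by simpa using abs_pos.1 (hδ.trans_le hP))
      have hw : Tendsto (fun ε : ℝ => (ε - I * P.2 : ℂ)) (𝓝[>] 0) (𝓝 ((0 : ℝ) - I * P.2)) :=
        (Continuous.tendsto (by fun_prop) 0).mono_left nhdsWithin_le_nhds
      exact ((continuousAt_heatKernel d a hslit X P.1).tendsto.comp hw).mul_const _

lemma lintegral_enorm_dualEvolution_zero_sq_le (ha : 0 ≤ a) (hδ : 0 < δ)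
    (hq : q'.HolderConjugate q) (hq₂ : 2 < q) (hr : r'.HolderConjugate r) (hr₂ : 2 ≤ r)
    (hrel : 2 / q = (d + a + 1) * (1 / 2 - 1 / r)) (hFm : Measurable F)
    (hF : Integrable F ((ωa d a).prod volume))
    (hF₁ : Integrable (fun P => ‖F P‖ ^ (r' / 2)) ((ωa d a).prod volume))
    (hF₂ : Integrable (fun P => ‖F P‖ ^ r') ((ωa d a).prod volume))
    (hFδ : ∀ P, |P.2| < δ → F P = 0) :
    ∫⁻ X, ‖dualEvolution d a 0 F X‖ₑ ^ 2 ∂ωa d a ≤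
      ENNReal.ofReal (strichartzConstSq d a q r) * mixedNorm (ωa d a) q' r' F ^ 2 := by
  have hε : Tendsto (fun n : ℕ => 1 / ((n : ℝ) + 1)) atTop (𝓝[>] 0) :=
    tendsto_nhdsWithin_iff.2 ⟨tendsto_one_div_add_atTop_nhds_zero_nat,
      .of_forall fun n => mem_Ioi.2 (by positivity)⟩
  exact lintegral_enorm_sq_le_of_tendsto (fun _ => measurable_dualEvolution a _ hFm)
    (fun n => lintegral_enorm_dualEvolution_sq_le ha (Nat.one_div_pos_of_nat (n := n)) hq hq₂ hr hr₂
      hrel hFm hF hF₁ hF₂)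
    (ae_of_all _ fun X => .inr ((tendsto_dualEvolution ha hδ hF hFδ X).comp hε))

/-- The operator `𝕋_a`. -/
def dualSchrodinger (d : ℕ) (a : ℝ) (F : ((Fin d → ℝ) × ℝ) × ℝ → ℂ) (X : (Fin d → ℝ) × ℝ) : ℂ :=
  ∫ t : ℝ, ∫ Y, SK d a X Y (-t) * F (Y, t) ∂ωa d a

/-- The times of size at least `1 / (n + 1)`. -/
def timesAwayFromZero (n : ℕ) : Set ℝ := {t | 1 / ((n : ℝ) + 1) ≤ |t|}

lemma measurableSet_timesAwayFromZero (n : ℕ) : MeasurableSet (timesAwayFromZero n) :=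
  measurableSet_le measurable_const (by fun_prop)

lemma ne_zero_of_mem_timesAwayFromZero {n : ℕ} {t : ℝ} (ht : t ∈ timesAwayFromZero n) : t ≠ 0 :=
  abs_pos.1 ((Nat.one_div_pos_of_nat (n := n)).trans_le ht)

lemma monotone_timesAwayFromZero : Monotone timesAwayFromZero :=
  fun _ _ hmn t (ht : _ ≤ |t|) => (Nat.one_div_le_one_div hmn).trans ht

lemma iUnion_timesAwayFromZero : ⋃ n, timesAwayFromZero n = {0}ᶜ := by
  ext t
  refine mem_iUnion.trans ⟨fun ⟨n, hn⟩ => ne_zero_of_mem_timesAwayFromZero hn, fun ht => ?_⟩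
  exact (exists_nat_one_div_lt (abs_pos.2 ht)).imp fun _ => le_of_lt

lemma heatKernel_zero_sub_I_mul (d : ℕ) (a : ℝ) {X Y : (Fin d → ℝ) × ℝ} (hX : 0 < X.2)
    (hY : 0 < Y.2) {t : ℝ} (ht : t ≠ 0) :
    heatKernel d a ((0 : ℝ) - I * t) X Y = SK d a X Y (-t) := by
  rw [← heatKernel_I_mul d a hX hY (neg_ne_zero.2 ht)]
  congr 1
  push_cast
  ring

/-- `F`, with the times smaller than `1 / (n + 1)` removed. -/
def timeTruncation (n : ℕ) (F : ((Fin d → ℝ) × ℝ) × ℝ → ℂ) : ((Fin d → ℝ) × ℝ) × ℝ → ℂ :=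
  (Prod.snd ⁻¹' timesAwayFromZero n).indicator F

lemma measurableSet_preimage_snd_timesAwayFromZero (n : ℕ) : MeasurableSet
    (Prod.snd ⁻¹' timesAwayFromZero n : Set (((Fin d → ℝ) × ℝ) × ℝ)) :=
  measurable_snd (measurableSet_timesAwayFromZero n)

lemma timeTruncation_eq_zero (n : ℕ) (F : ((Fin d → ℝ) × ℝ) × ℝ → ℂ) (P : ((Fin d → ℝ) × ℝ) × ℝ)
    (hP : |P.2| < 1 / ((n : ℝ) + 1)) : timeTruncation n F P = 0 :=
  indicator_of_notMem (s := Prod.snd ⁻¹' timesAwayFromZero n) (not_le.2 hP) F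

lemma dualEvolution_zero_timeTruncation (ha : 0 ≤ a) (hF : Integrable F ((ωa d a).prod volume))
    (n : ℕ) {X : (Fin d → ℝ) × ℝ} (hX : 0 < X.2) :
    dualEvolution d a 0 (timeTruncation n F) X =
      ∫ t in timesAwayFromZero n, ∫ Y, SK d a X Y (-t) * F (Y, t) ∂ωa d a := by
  have hFn : Integrable (timeTruncation n F) ((ωa d a).prod volume) :=
    hF.indicator (measurableSet_preimage_snd_timesAwayFromZero n)
  have hint := (hFn.norm.const_mul _).mono'
    (aestronglyMeasurable_heatKernel_sub_I_mul_mul a 0 hFn.1 X) <| ae_of_all _ <|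
      norm_heatKernel_sub_I_mul_mul_le ha le_rfl Nat.one_div_pos_of_nat
        (timeTruncation_eq_zero n F) X
  rw [dualEvolution, integral_prod_symm _ hint,
    ← integral_indicator (measurableSet_timesAwayFromZero n)]
  refine integral_congr_ae (ae_of_all _ fun t => ?_)
  by_cases ht : t ∈ timesAwayFromZero n
  · rw [indicator_of_mem ht]
    refine integral_congr_ae ((ae_ωa_snd_pos d a).mono fun Y hY => ?_)
    beta_reduce
    rw [heatKernel_zero_sub_I_mul d a hX hY (ne_zero_of_mem_timesAwayFromZero ht), timeTruncation,
      indicator_of_mem (s := Prod.snd ⁻¹' timesAwayFromZero n) ht]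
  · simp [timeTruncation, ht]

lemma tendsto_dualEvolution_timeTruncation (ha : 0 ≤ a)
    (hF : Integrable F ((ωa d a).prod volume)) {X : (Fin d → ℝ) × ℝ} (hX : 0 < X.2)
    (hint : Integrable fun t : ℝ => ∫ Y, SK d a X Y (-t) * F (Y, t) ∂ωa d a) :
    Tendsto (fun n => dualEvolution d a 0 (timeTruncation n F) X) atTop
      (𝓝 (dualSchrodinger d a F X)) := by
  simp only [dualEvolution_zero_timeTruncation ha hF _ hX]
  have h := tendsto_setIntegral_of_monotone measurableSet_timesAwayFromZero
    monotone_timesAwayFromZero hint.integrableOn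
  rwa [iUnion_timesAwayFromZero, restrict_compl_singleton] at h

theorem lintegral_enorm_dualSchrodinger_sq_le (ha : 0 ≤ a)
    (hq : q'.HolderConjugate q) (hq₂ : 2 < q) (hr : r'.HolderConjugate r) (hr₂ : 2 ≤ r)
    (hrel : 2 / q = (d + a + 1) * (1 / 2 - 1 / r)) (hFm : Measurable F)
    (hF : Integrable F ((ωa d a).prod volume))
    (hF₁ : Integrable (fun P => ‖F P‖ ^ (r' / 2)) ((ωa d a).prod volume))
    (hF₂ : Integrable (fun P => ‖F P‖ ^ r') ((ωa d a).prod volume)) :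
    ∫⁻ X, ‖dualSchrodinger d a F X‖ₑ ^ 2 ∂ωa d a ≤
      ENNReal.ofReal (strichartzConstSq d a q r) * mixedNorm (ωa d a) q' r' F ^ 2 := by
  have hS := measurableSet_preimage_snd_timesAwayFromZero (d := d)
  have hrpow (n : ℕ) {c : ℝ} (hc : 0 < c)
      (hFc : Integrable (fun P => ‖F P‖ ^ c) ((ωa d a).prod volume)) :
      Integrable (fun P => ‖timeTruncation n F P‖ ^ c) ((ωa d a).prod volume) := by
    refine (hFc.indicator (hS n)).congr (ae_of_all _ fun P => ?_)
    by_cases hP : P.2 ∈ timesAwayFromZero n <;>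
      simp [timeTruncation, hP, Real.zero_rpow hc.ne']
  refine lintegral_enorm_sq_le_of_tendsto (u := fun n => dualEvolution d a 0 (timeTruncation n F))
    (fun n => measurable_dualEvolution a 0 (hFm.indicator (hS n))) (fun n => ?_) ?_
  · refine (lintegral_enorm_dualEvolution_zero_sq_le ha Nat.one_div_pos_of_nat hq hq₂ hr hr₂ hrel
      (hFm.indicator (hS n)) (hF.indicator (hS n)) (hrpow n (half_pos hr.pos) hF₁)
      (hrpow n hr.pos hF₂) (timeTruncation_eq_zero n F)).trans ?_
    gcongr
    exact mixedNorm_mono hq.nonneg hr.nonneg fun _ => enorm_indicator_le_enorm_self _ _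
  · refine (ae_ωa_snd_pos d a).mono fun X hX => ?_
    by_cases hint : Integrable fun t : ℝ => ∫ Y, SK d a X Y (-t) * F (Y, t) ∂ωa d a
    · exact .inr (tendsto_dualEvolution_timeTruncation ha hF hX hint)
    · exact .inl (integral_undef hint)

end Limits

/-! ### Schwartz functions -/

section Schwartz

open scoped SchwartzMap

lemma hasTemperateGrowth_prod {E F : Type*} [NormedAddCommGroup E] [MeasurableSpace E]
    [BorelSpace E] [NormedAddCommGroup F] [MeasurableSpace F] [BorelSpace F]
    [SecondCountableTopologyEither E F] (μ : Measure E) (ν : Measure F) [SFinite μ] [SFinite ν]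
    [hμ : μ.HasTemperateGrowth] [hν : ν.HasTemperateGrowth] : (μ.prod ν).HasTemperateGrowth := by
  obtain ⟨m, hm⟩ := hμ.exists_integrable
  obtain ⟨n, hn⟩ := hν.exists_integrable
  refine ⟨m + n, (hm.mul_prod hn).mono' ?_ (ae_of_all _ fun P => ?_)⟩
  · exact Measurable.aestronglyMeasurable (by fun_prop)
  · rw [Real.norm_of_nonneg (by positivity), Nat.cast_add, neg_add,
      Real.rpow_add (by positivity)]
    gcongr ?_ * ?_
    · exact Real.rpow_le_rpow_of_nonpos (by positivity) (by gcongr; exact norm_fst_le P) (by simp)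
    · exact Real.rpow_le_rpow_of_nonpos (by positivity) (by gcongr; exact norm_snd_le P) (by simp)

variable {d : ℕ} {a : ℝ}

lemma hasTemperateGrowth_withDensity_rpow (ha : 0 ≤ a) :
    (((volume : Measure ℝ).restrict (Ioi 0)).withDensity
      fun z => ENNReal.ofReal (z ^ a)).HasTemperateGrowth := by
  refine ⟨⌈a⌉₊ + 2, ?_⟩
  rw [integrable_withDensity_iff_integrable_smul₀' (by fun_prop) (by simp)]
  have hdom : Integrable (fun z : ℝ => (1 + ‖z‖) ^ (-2 : ℝ)) := integrable_one_add_norm (by simp)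
  refine hdom.restrict.mono' (Measurable.aestronglyMeasurable (by fun_prop)) <|
    (ae_restrict_mem measurableSet_Ioi).mono fun z hz => ?_
  have hz : 0 < z := hz
  have hza : z ^ a ≤ (1 + z) ^ (⌈a⌉₊ : ℝ) :=
    (Real.rpow_le_rpow hz.le (by linarith) ha).trans
      (Real.rpow_le_rpow_of_exponent_le (by linarith) (Nat.le_ceil a))
  rw [ENNReal.toReal_ofReal (by positivity), smul_eq_mul, Real.norm_of_nonneg (by positivity),
    Real.norm_of_nonneg hz.le]
  calc z ^ a * (1 + z) ^ (-((⌈a⌉₊ + 2 : ℕ) : ℝ))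
      ≤ (1 + z) ^ (⌈a⌉₊ : ℝ) * (1 + z) ^ (-((⌈a⌉₊ + 2 : ℕ) : ℝ)) := by gcongr
    _ = (1 + z) ^ (-2 : ℝ) := by
      rw [← Real.rpow_add (by positivity)]
      congr 1
      push_cast
      ring

lemma hasTemperateGrowth_ωa_prod_volume (d : ℕ) (ha : 0 ≤ a) :
    ((ωa d a).prod (volume : Measure ℝ)).HasTemperateGrowth := by
  have := hasTemperateGrowth_withDensity_rpow ha
  have : (ωa d a).HasTemperateGrowth := hasTemperateGrowth_prod _ _
  exact hasTemperateGrowth_prod _ _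

lemma integrable_norm_schwartzMap_rpow (ha : 0 ≤ a) (F : 𝓢(((Fin d → ℝ) × ℝ) × ℝ, ℂ)) {c : ℝ}
    (hc : 0 < c) : Integrable (fun P => ‖F P‖ ^ c) ((ωa d a).prod volume) := by
  have := hasTemperateGrowth_ωa_prod_volume d ha
  simpa [hc.le] using (F.memLp (ENNReal.ofReal c) ((ωa d a).prod volume)).integrable_norm_rpow
    (by simpa using hc) (by simp)

variable {q r : ℝ}

theorem eLpNorm_dualSchrodinger_le (ha : 0 ≤ a) (hq : 2 < q) (hr : 2 < r)
    (hrel : 2 / q = (d + a + 1) * (1 / 2 - 1 / r)) (F : 𝓢(((Fin d → ℝ) × ℝ) × ℝ, ℂ)) :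
    eLpNorm (dualSchrodinger d a F) 2 (ωa d a) ≤
      ENNReal.ofReal (strichartzConstSq d a q r ^ (1 / 2 : ℝ)) *
        mixedNorm (ωa d a) (q / (q - 1)) (r / (r - 1)) F := by
  have hq' := (Real.HolderConjugate.conjExponent (show 1 < q by linarith)).symm
  have hr' := (Real.HolderConjugate.conjExponent (show 1 < r by linarith)).symm
  have hF {c : ℝ} (hc : 0 < c) := integrable_norm_schwartzMap_rpow (d := d) ha F hc
  have hF₁ : Integrable F ((ωa d a).prod volume) :=
    (integrable_norm_iff F.continuous.aestronglyMeasurable).1 (by simpa using hF one_pos)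
  have hmain := lintegral_enorm_dualSchrodinger_sq_le ha hq' hq hr' hr.le hrel
    F.continuous.measurable hF₁ (hF (half_pos hr'.pos)) (hF hr'.pos)
  have hC := strichartzConstSq_pos d (show -1 < a by linarith) hq r
  calc
    _ = (∫⁻ X, ‖dualSchrodinger d a F X‖ₑ ^ 2 ∂ωa d a) ^ (1 / 2 : ℝ) := by
      simp [eLpNorm_eq_lintegral_rpow_enorm_toReal]
    _ ≤ (ENNReal.ofReal (strichartzConstSq d a q r) *
          mixedNorm (ωa d a) (q / (q - 1)) (r / (r - 1)) F ^ 2) ^ (1 / 2 : ℝ) :=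
      ENNReal.rpow_le_rpow hmain (by positivity)
    _ = _ := by
      rw [ENNReal.mul_rpow_of_nonneg _ _ (by positivity), ENNReal.ofReal_rpow_of_pos hC,
        ← ENNReal.rpow_natCast_mul]
      norm_num

theorem eLpNorm_dualSchrodinger_le_eLpNorm (ha : 0 ≤ a)
    (hq : q = 2 * (d + a + 3) / (d + a + 1)) (F : 𝓢(((Fin d → ℝ) × ℝ) × ℝ, ℂ)) :
    eLpNorm (dualSchrodinger d a F) 2 (ωa d a) ≤
      ENNReal.ofReal (strichartzConstSq d a q q ^ (1 / 2 : ℝ)) *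
        eLpNorm F (ENNReal.ofReal (2 * (d + a + 3) / (d + a + 5))) ((ωa d a).prod volume) := by
  have : (0 : ℝ) ≤ d := d.cast_nonneg
  have hq₂ : 2 < q := by rw [hq, lt_div_iff₀ (by positivity)]; linarith
  have hrel : 2 / q = (d + a + 1) * (1 / 2 - 1 / q) := by
    rw [hq]
    field_simp
    ring
  have hq' : q / (q - 1) = 2 * (d + a + 3) / (d + a + 5) := by
    rw [div_eq_div_iff (by linarith) (by positivity), hq]
    field_simp
    ring
  rw [← hq', ← mixedNorm_self (by rw [hq']; positivity) F.continuous.measurable.aemeasurable]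
  exact eLpNorm_dualSchrodinger_le ha hq₂ hq₂ hrel F

end Schwartz

end DualStrichartz

/-- A restriction-type (dual Strichartz) estimate: for `a ≥ 0` and
`q, r > 2` with `2/q = (d+a+1)(1/2 − 1/r)`, the operator
`𝕋_a(F)(X) = ∫_ℝ ∫ 𝕊_a(X,Y,−t) F(Y,t) dω_a(Y) dt` satisfies
`‖𝕋_a(F)‖_{L²_a} ≤ C ‖F‖_{L^{q'}_t L^{r'}_a}`; in particular, for
`q = r = 2(d+a+3)/(d+a+1)` one has
`‖𝕋_a(F)‖_{L²_a} ≤ C ‖F‖_{L^{2(d+a+3)/(d+a+5)}(ℝ^{d+1}_+×ℝ, dω_a dt)}`. -/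
theorem dual_strichartz_restriction
    (d : ℕ) (hd : 1 ≤ d) (a : ℝ) (ha : 0 ≤ a) (q r : ℝ) (hq : 2 < q) (hr : 2 < r)
    (hrel : 2 / q = ((d : ℝ) + a + 1) * (1 / 2 - 1 / r)) :
    (∃ C > (0 : ℝ), ∀ F : SchwartzMap (((Fin d → ℝ) × ℝ) × ℝ) ℂ,
      eLpNorm (fun X => ∫ t : ℝ, ∫ Y, SK d a X Y (-t) * F (Y, t) ∂(ωa d a)) 2 (ωa d a)
        ≤ ENNReal.ofReal C *
            (∫⁻ t : ℝ,
              (∫⁻ Y, (‖F (Y, t)‖₊ : ℝ≥0∞) ^ (r / (r - 1)) ∂(ωa d a))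
                ^ ((q / (q - 1)) / (r / (r - 1)))) ^ (1 / (q / (q - 1)))) ∧
    (∃ C > (0 : ℝ), ∀ F : SchwartzMap (((Fin d → ℝ) × ℝ) × ℝ) ℂ,
      eLpNorm (fun X => ∫ t : ℝ, ∫ Y, SK d a X Y (-t) * F (Y, t) ∂(ωa d a)) 2 (ωa d a)
        ≤ ENNReal.ofReal C *
            eLpNorm (fun P : ((Fin d → ℝ) × ℝ) × ℝ => F P)
              (ENNReal.ofReal (2 * ((d : ℝ) + a + 3) / ((d : ℝ) + a + 5)))
              ((ωa d a).prod volume)) := by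
  have : (0 : ℝ) ≤ d := d.cast_nonneg
  set Q : ℝ := 2 * (d + a + 3) / (d + a + 1) with hQ
  have hQ₂ : 2 < Q := by rw [hQ, lt_div_iff₀ (by positivity)]; linarith
  have hC {s : ℝ} (hs : 2 < s) (r : ℝ) : 0 < strichartzConstSq d a s r ^ (1 / 2 : ℝ) :=
    Real.rpow_pos_of_pos (strichartzConstSq_pos d (by linarith) hs r) _
  exact ⟨⟨_, hC hq r, eLpNorm_dualSchrodinger_le ha hq hr hrel⟩,
    ⟨_, hC hQ₂ Q, eLpNorm_dualSchrodinger_le_eLpNorm ha hQ⟩⟩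

end
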